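/- Let d₁, d₂ ≥ 1 be integers, s > 0 and V > 0. For every pair of bounded nonempty open connected sets Ω₁ ⊆ ℝ^{d₁}, Ω₂ ⊆ ℝ^{d₂} with |Ω₁||Ω₂| = V, one has λ₁(Ω₁ × Ω₂) ≥ μ₁(B₂)^{1/(s+1)} · V^{-2/(d₁+(1+s)d₂)} · E₁(1, ℝ^{d₁}) · ( τ_{d₁}^{2s/d₁} · d₂ μ₁(B₁) / ((d₁+s d₂) μ₁(B₂)) )^{ d₁ / ((s+1)(d₁+(1+s)d₂)) }. -/

import Mathlib

open MeasureTheory Set Filter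

/-- `τ_d = π^{d/2}/Γ(1+d/2)`, the volume of the unit ball in `ℝ^d`. -/
noncomputable def tau (d : ℕ) : ℝ := Real.pi ^ ((d : ℝ) / 2) / Real.Gamma (1 + (d : ℝ) / 2)

/-- First Dirichlet eigenvalue (Rayleigh quotient infimum) of the Laplacian on `Ω ⊆ ℝ^d`. -/
noncomputable def dirichletMu1 (d : ℕ) (Ω : Set (EuclideanSpace ℝ (Fin d))) : ℝ :=
  sInf { q : ℝ | ∃ g : EuclideanSpace ℝ (Fin d) → ℝ,
    ContDiff ℝ (⊤ : ℕ∞) g ∧ HasCompactSupport g ∧ tsupport g ⊆ Ω ∧ g ≠ 0 ∧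
    q = (∫ x in Ω, ‖gradient g x‖ ^ 2) / (∫ x in Ω, (g x) ^ 2) }

/-- First eigenvalue (Rayleigh quotient infimum) of the Schrödinger operator
`-Δ + σ |x|^{2s}` on `Ω ⊆ ℝ^d`. -/
noncomputable def schrodingerE1 (d : ℕ) (s σ : ℝ) (Ω : Set (EuclideanSpace ℝ (Fin d))) : ℝ :=
  sInf { q : ℝ | ∃ f : EuclideanSpace ℝ (Fin d) → ℝ,
    ContDiff ℝ (⊤ : ℕ∞) f ∧ HasCompactSupport f ∧ tsupport f ⊆ Ω ∧ f ≠ 0 ∧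
    q = (∫ x in Ω, (‖gradient f x‖ ^ 2 + σ * ‖x‖ ^ (2 * s) * (f x) ^ 2)) /
        (∫ x in Ω, (f x) ^ 2) }

/-- First eigenvalue (Rayleigh quotient infimum) of the Grushin operator with Dirichlet
conditions on `Ω ⊆ ℝ^{d₁} × ℝ^{d₂}`. -/
noncomputable def grushinLambda1 (d₁ d₂ : ℕ) (s : ℝ)
    (Ω : Set (EuclideanSpace ℝ (Fin d₁) × EuclideanSpace ℝ (Fin d₂))) : ℝ :=
  sInf { q : ℝ | ∃ u : EuclideanSpace ℝ (Fin d₁) × EuclideanSpace ℝ (Fin d₂) → ℝ,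
    ContDiff ℝ (⊤ : ℕ∞) u ∧ HasCompactSupport u ∧ tsupport u ⊆ Ω ∧ u ≠ 0 ∧
    q = (∫ x in Ω, (‖gradient (fun y => u (y, x.2)) x.1‖ ^ 2
          + ‖x.1‖ ^ (2 * s) * ‖gradient (fun y => u (x.1, y)) x.2‖ ^ 2)) /
        (∫ x in Ω, (u x) ^ 2) }


namespace GFK
open scoped ENNReal Topology Pointwise

theorem bm1_compact {K L S : Set ℝ} (hK : IsCompact K) (hL : IsCompact L) (hKn : K.Nonempty)
    (hLn : L.Nonempty) (hS : ∀ x ∈ K, ∀ y ∈ L, x + y ∈ S) :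
    volume K + volume L ≤ volume S := by
  obtain ⟨a, haK, ha⟩ := hK.exists_isGreatest hKn
  obtain ⟨b, hbL, hb⟩ := hL.exists_isLeast hLn
  have h1 : (fun x => x + b) '' K ∪ (fun y => a + y) '' L ⊆ S := by
    rintro _ (⟨x, hx, rfl⟩ | ⟨y, hy, rfl⟩)
    · exact hS x hx b hbL
    · exact hS a haK y hy
  have hv1 : volume ((fun x => x + b) '' K) = volume K := by
    rw [image_add_right]; simp
  have hv2 : volume ((fun y => a + y) '' L) = volume L := by
    rw [image_add_left]; simp
  have hm : MeasurableSet ((fun y => a + y) '' L) := by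
    exact (hL.image (by fun_prop)).measurableSet
  refine le_trans (le_of_eq ?_) (measure_mono h1)
  rw [← hv1, ← hv2]
  symm
  apply measure_union₀ hm.nullMeasurableSet
  refine measure_mono_null (t := {a + b}) ?_ (by simp)
  rintro _ ⟨⟨x, hx, rfl⟩, ⟨y, hy, h⟩⟩
  have := ha hx
  have := hb hy
  simp only [mem_singleton_iff] at *
  linarith

theorem bm1 {A B S : Set ℝ} (hA : MeasurableSet A) (hB : MeasurableSet B) (hAn : A.Nonempty)
    (hBn : B.Nonempty) (hS : ∀ x ∈ A, ∀ y ∈ B, x + y ∈ S) :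
    volume A + volume B ≤ volume S := by
  obtain ⟨a, ha⟩ := hAn
  obtain ⟨b, hb⟩ := hBn
  rw [hA.measure_eq_iSup_isCompact, hB.measure_eq_iSup_isCompact]
  suffices h : (⨆ K, ⨆ (_ : K ⊆ A ∧ IsCompact K), volume K) +
      (⨆ K, ⨆ (_ : K ⊆ B ∧ IsCompact K), volume K) ≤ volume S by
    simpa only [iSup_and] using h
  refine ENNReal.biSup_add_biSup_le' (p := fun K => K ⊆ A ∧ IsCompact K)
    (q := fun K => K ⊆ B ∧ IsCompact K) ⟨∅, by simp, by simp⟩ ⟨∅, by simp, by simp⟩ ?_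
  · rintro K ⟨hKA, hK⟩ L ⟨hLB, hL⟩
    have := bm1_compact (S := S) (hK.insert a) (hL.insert b) (by simp) (by simp) (by
      intro x hx y hy
      refine hS x ?_ y ?_
      · rcases hx with rfl | hx
        exacts [ha, hKA hx]
      · rcases hy with rfl | hy
        exacts [hb, hLB hy])
    refine le_trans (add_le_add (measure_mono (subset_insert _ _)) (measure_mono (subset_insert _ _))) this

theorem layer {X : Type*} [MeasurableSpace X] (μ : Measure X) {f : X → ℝ≥0∞} (hf : Measurable f)
    (hfin : ∀ x, f x ≠ ∞) :
    ∫⁻ x, f x ∂μ = ∫⁻ t in Ioi (0:ℝ), μ {x | ENNReal.ofReal t < f x} := by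
  have h := lintegral_eq_lintegral_meas_lt μ (f := fun x => (f x).toReal)
    (Eventually.of_forall fun x => ENNReal.toReal_nonneg) hf.ennreal_toReal.aemeasurable
  simp only [ENNReal.ofReal_toReal (hfin _)] at h
  rw [h]
  refine setLIntegral_congr_fun measurableSet_Ioi fun t ht => ?_
  congr 1
  ext x
  simp only [mem_ofPred_eq]
  exact (ENNReal.ofReal_lt_iff_lt_toReal (le_of_lt ht) (hfin x)).symm

theorem amgm {α β : ℝ} (hα : 0 < α) (hβ : 0 < β) (hαβ : α + β = 1) (a b : ℝ≥0∞) :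
    a ^ α * b ^ β ≤ ENNReal.ofReal α * a + ENNReal.ofReal β * b := by
  by_cases ha : a = ∞
  · subst ha
    have : ENNReal.ofReal α * ∞ = ∞ := ENNReal.mul_top (by simpa using hα)
    rw [this]; simp
  by_cases hb : b = ∞
  · subst hb
    have : ENNReal.ofReal β * ∞ = ∞ := ENNReal.mul_top (by simpa using hβ)
    rw [this]; simp
  lift a to NNReal using ha
  lift b to NNReal using hb
  have h := Real.geom_mean_le_arith_mean2_weighted hα.le hβ.le a.2 b.2 hαβ
  rw [← ENNReal.coe_rpow_of_nonneg _ hα.le, ← ENNReal.coe_rpow_of_nonneg _ hβ.le,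
    ENNReal.ofReal, ENNReal.ofReal]
  norm_cast
  rw [← NNReal.coe_le_coe]
  push_cast
  rw [Real.coe_toNNReal _ hα.le, Real.coe_toNNReal _ hβ.le]
  exact h

def PL (α β : ℝ) (E : Type*) [MeasurableSpace E] [AddCommGroup E] [Module ℝ E]
    (μ : Measure E) : Prop :=
  ∀ f g h : E → ℝ≥0∞, Measurable f → Measurable g → Measurable h →
    (∀ x y, f x ^ α * g y ^ β ≤ h (α • x + β • y)) →
    (∫⁻ x, f x ∂μ) ^ α * (∫⁻ x, g x ∂μ) ^ β ≤ ∫⁻ x, h x ∂μ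

theorem pl1_norm {α β : ℝ} (hα : 0 < α) (hβ : 0 < β) (hαβ : α + β = 1) {f g h : ℝ → ℝ≥0∞}
    (hf : Measurable f) (hg : Measurable g) (hh : Measurable h)
    (hle : ∀ x y, f x ^ α * g y ^ β ≤ h (α • x + β • y))
    (hf1 : ∀ x, f x ≤ 1) (hg1 : ∀ x, g x ≤ 1) (hfs : ∀ c < 1, ∃ x, c < f x)
    (hgs : ∀ c < 1, ∃ x, c < g x) :
    ENNReal.ofReal α * (∫⁻ x, f x) + ENNReal.ofReal β * (∫⁻ x, g x) ≤ ∫⁻ x, h x := by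
  have hfin : ∀ x, f x ≠ ∞ := fun x => ne_top_of_le_ne_top (by simp) (hf1 x)
  have hgin : ∀ x, g x ≠ ∞ := fun x => ne_top_of_le_ne_top (by simp) (hg1 x)
  have hmono : ∫⁻ x, min (h x) 1 ≤ ∫⁻ x, h x := lintegral_mono fun x => min_le_left _ _
  refine le_trans ?_ hmono
  rw [layer _ hf hfin, layer _ hg hgin, layer _ (hh.min measurable_const)
    (fun x => ne_top_of_le_ne_top (by simp) (min_le_right _ _))]
  have anti : ∀ k : ℝ → ℝ≥0∞, Measurable fun t : ℝ => volume {x | ENNReal.ofReal t < k x} := by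
    intro k
    refine Antitone.measurable fun s t hst => measure_mono fun x hx => ?_
    exact lt_of_le_of_lt (ENNReal.ofReal_le_ofReal hst) hx
  rw [← lintegral_const_mul _ (anti f), ← lintegral_const_mul _ (anti g),
    ← lintegral_add_left ((anti f).const_mul _)]
  refine setLIntegral_mono' measurableSet_Ioi fun t ht => ?_
  by_cases h1 : 1 ≤ ENNReal.ofReal t
  · have e1 : {x | ENNReal.ofReal t < f x} = ∅ := by
      ext x; simp; exact (hf1 x).trans h1
    have e2 : {x | ENNReal.ofReal t < g x} = ∅ := by
      ext x; simp; exact (hg1 x).trans h1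
    rw [e1, e2]; simp
  push Not at h1
  have hmf : MeasurableSet {x | ENNReal.ofReal t < f x} := measurableSet_lt measurable_const hf
  have hmg : MeasurableSet {x | ENNReal.ofReal t < g x} := measurableSet_lt measurable_const hg
  have key := bm1 (A := α • {x | ENNReal.ofReal t < f x}) (B := β • {x | ENNReal.ofReal t < g x})
    (S := {x | ENNReal.ofReal t < min (h x) 1}) (hmf.const_smul₀ α) (hmg.const_smul₀ β)
    (by obtain ⟨x, hx⟩ := hfs _ h1; exact ⟨_, smul_mem_smul_set hx⟩)
    (by obtain ⟨x, hx⟩ := hgs _ h1; exact ⟨_, smul_mem_smul_set hx⟩)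
    (by
      rintro _ ⟨x, hx, rfl⟩ _ ⟨y, hy, rfl⟩
      simp only [mem_ofPred_eq, lt_min_iff] at *
      refine ⟨lt_of_lt_of_le ?_ (hle x y), h1⟩
      have ht0 : ENNReal.ofReal t ≠ 0 := by simpa using ht
      calc ENNReal.ofReal t = ENNReal.ofReal t ^ α * ENNReal.ofReal t ^ β := by
            rw [← ENNReal.rpow_add _ _ ht0 (by simp), hαβ, ENNReal.rpow_one]
        _ < _ := ENNReal.mul_lt_mul (ENNReal.rpow_lt_rpow hx hα) (ENNReal.rpow_lt_rpow hy hβ))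
  rw [Measure.addHaar_smul, Measure.addHaar_smul] at key
  simpa [abs_of_pos hα, abs_of_pos hβ] using key

theorem pl1_bdd {α β : ℝ} (hα : 0 < α) (hβ : 0 < β) (hαβ : α + β = 1) {f g h : ℝ → ℝ≥0∞}
    (hf : Measurable f) (hg : Measurable g) (hh : Measurable h)
    (hle : ∀ x y, f x ^ α * g y ^ β ≤ h (α • x + β • y))
    (hf1 : ⨆ x, f x ≠ ∞) (hg1 : ⨆ x, g x ≠ ∞) :
    (∫⁻ x, f x) ^ α * (∫⁻ x, g x) ^ β ≤ ∫⁻ x, h x := by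
  set F := ⨆ x, f x with hF
  set G := ⨆ x, g x with hG
  have hfF : ∀ x, f x ≤ F := fun x => le_iSup f x
  have hgG : ∀ x, g x ≤ G := fun x => le_iSup g x
  by_cases hF0 : F = 0
  · have : ∀ x, f x = 0 := fun x => le_antisymm (hF0 ▸ hfF x) bot_le
    simp [this, hα]
  by_cases hG0 : G = 0
  · have : ∀ x, g x = 0 := fun x => le_antisymm (hG0 ▸ hgG x) bot_le
    simp [this, hβ]
  have hc0 : F ^ α * G ^ β ≠ 0 := by
    simp [hF0, hG0, hα.not_gt, hβ.not_gt, hf1, hg1]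
  have hct : F ^ α * G ^ β ≠ ∞ :=
    ENNReal.mul_ne_top (ENNReal.rpow_ne_top_of_nonneg hα.le hf1)
      (ENNReal.rpow_ne_top_of_nonneg hβ.le hg1)
  have hsup : ∀ (k : ℝ → ℝ≥0∞), ⨆ x, k x ≠ 0 → ⨆ x, k x ≠ ∞ → ∀ c < 1, ∃ x, c < (⨆ x, k x)⁻¹ * k x := by
    intro k h0 ht c hc
    have : c * (⨆ x, k x) < ⨆ x, k x := by
      conv_rhs => rw [← one_mul (⨆ x, k x)]
      exact (ENNReal.mul_lt_mul_iff_left h0 ht).2 hc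
    obtain ⟨x, hx⟩ := lt_iSup_iff.1 this
    refine ⟨x, ?_⟩
    rw [mul_comm, ← div_eq_mul_inv, ENNReal.lt_div_iff_mul_lt (Or.inl h0) (Or.inl ht)]
    exact hx
  have key := pl1_norm hα hβ hαβ (f := fun x => F⁻¹ * f x) (g := fun x => G⁻¹ * g x)
    (h := fun x => (F ^ α * G ^ β)⁻¹ * h x) (hf.const_mul _) (hg.const_mul _) (hh.const_mul _)
    (by
      intro x y
      rw [ENNReal.mul_rpow_of_nonneg _ _ hα.le, ENNReal.mul_rpow_of_nonneg _ _ hβ.le,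
        ENNReal.inv_rpow, ENNReal.inv_rpow]
      calc _ = (F ^ α)⁻¹ * (G ^ β)⁻¹ * (f x ^ α * g y ^ β) := by ring
        _ ≤ _ := by
          rw [ENNReal.mul_inv]
          · gcongr
            exact hle x y
          · right; exact ENNReal.rpow_ne_top_of_nonneg hβ.le hg1
          · left; exact ENNReal.rpow_ne_top_of_nonneg hα.le hf1)
    (by intro x; rw [mul_comm, ← div_eq_mul_inv]; exact ENNReal.div_le_of_le_mul (by simpa using hfF x))
    (by intro x; rw [mul_comm, ← div_eq_mul_inv]; exact ENNReal.div_le_of_le_mul (by simpa using hgG x))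
    (hsup f hF0 hf1) (hsup g hG0 hg1)
  have k2 := (amgm hα hβ hαβ _ _).trans key
  rw [lintegral_const_mul _ hf, lintegral_const_mul _ hg, lintegral_const_mul _ hh,
    ENNReal.mul_rpow_of_nonneg _ _ hα.le, ENNReal.mul_rpow_of_nonneg _ _ hβ.le,
        ENNReal.inv_rpow, ENNReal.inv_rpow] at k2
  have e : (F ^ α)⁻¹ * (∫⁻ x, f x) ^ α * ((G ^ β)⁻¹ * (∫⁻ x, g x) ^ β)
      = (F ^ α * G ^ β)⁻¹ * ((∫⁻ x, f x) ^ α * (∫⁻ x, g x) ^ β) := by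
    rw [ENNReal.mul_inv]
    · ring
    · right; exact ENNReal.rpow_ne_top_of_nonneg hβ.le hg1
    · left; exact ENNReal.rpow_ne_top_of_nonneg hα.le hf1
  rw [e] at k2
  exact (ENNReal.mul_le_mul_iff_right (ENNReal.inv_ne_zero.2 hct) (ENNReal.inv_ne_top.2 hc0)).1 k2

theorem pl1 {α β : ℝ} (hα : 0 < α) (hβ : 0 < β) (hαβ : α + β = 1) :
    PL α β ℝ volume := by
  intro f g h hf hg hh hle
  by_cases hF0 : ∫⁻ x, f x = 0
  · simp [hF0, hα]
  by_cases hG0 : ∫⁻ x, g x = 0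
  · simp [hG0, hβ]
  have hconv : ∀ k : ℝ → ℝ≥0∞, Measurable k →
      Tendsto (fun n : ℕ => ∫⁻ x, min (k x) n) atTop (𝓝 (∫⁻ x, k x)) := by
    intro k hk
    apply lintegral_tendsto_of_tendsto_of_monotone
    · intro n; exact (hk.min measurable_const).aemeasurable
    · refine Eventually.of_forall fun x m n hmn => ?_
      simp only
      gcongr
    · refine Eventually.of_forall fun x => ?_
      have : Tendsto (fun n : ℕ => min (k x) (n : ℝ≥0∞)) atTop (𝓝 (min (k x) ∞)) :=
        tendsto_const_nhds.min ENNReal.tendsto_nat_nhds_top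
      simpa using this
  have hlim : Tendsto (fun n : ℕ => (∫⁻ x, min (f x) n) ^ α * (∫⁻ x, min (g x) n) ^ β) atTop
      (𝓝 ((∫⁻ x, f x) ^ α * (∫⁻ x, g x) ^ β)) := by
    apply ENNReal.Tendsto.mul
    · exact (ENNReal.continuous_rpow_const.tendsto _).comp (hconv f hf)
    · left; simp [hF0, hα.not_gt]
    · exact (ENNReal.continuous_rpow_const.tendsto _).comp (hconv g hg)
    · left; simp [hG0, hβ.not_gt]
  refine le_of_tendsto' hlim fun n => ?_
  refine pl1_bdd hα hβ hαβ (hf.min measurable_const) (hg.min measurable_const) hh ?_ ?_ ?_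
  · intro x y
    refine le_trans ?_ (hle x y)
    gcongr <;> exact min_le_left _ _
  · exact ne_top_of_le_ne_top (ENNReal.natCast_ne_top n) (iSup_le fun x => min_le_right _ _)
  · exact ne_top_of_le_ne_top (ENNReal.natCast_ne_top n) (iSup_le fun x => min_le_right _ _)

theorem pl_prod {α β : ℝ} {E F : Type*} [MeasurableSpace E] [AddCommGroup E] [Module ℝ E]
    [MeasurableSpace F] [AddCommGroup F] [Module ℝ F] {μ : Measure E} {ν : Measure F}
    [SFinite μ] [SFinite ν]
    (h1 : PL α β E μ) (h2 : PL α β F ν) : PL α β (E × F) (μ.prod ν) := by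
  intro f g h hf hg hh hle
  rw [lintegral_prod _ hf.aemeasurable, lintegral_prod _ hg.aemeasurable,
    lintegral_prod _ hh.aemeasurable]
  refine h1 _ _ _ hf.lintegral_prod_right' hg.lintegral_prod_right' hh.lintegral_prod_right' ?_
  intro x y
  refine h2 _ _ _ (hf.comp measurable_prodMk_left) (hg.comp measurable_prodMk_left)
    (hh.comp measurable_prodMk_left) ?_
  intro a b
  exact hle (x, a) (y, b)

theorem pl_equiv {α β : ℝ} {E F : Type*} [MeasurableSpace E] [AddCommGroup E] [Module ℝ E]
    [MeasurableSpace F] [AddCommGroup F] [Module ℝ F] {μ : Measure E} {ν : Measure F}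
    (e : E → F) (he : MeasurePreserving e μ ν)
    (hlin : ∀ x y, e (α • x + β • y) = α • e x + β • e y)
    (h1 : PL α β E μ) : PL α β F ν := by
  intro f g h hf hg hh hle
  rw [← he.lintegral_comp hf, ← he.lintegral_comp hg, ← he.lintegral_comp hh]
  refine h1 _ _ _ (hf.comp he.measurable) (hg.comp he.measurable) (hh.comp he.measurable) ?_
  intro x y
  simp only [hlin]
  exact hle _ _

theorem pl_pi {α β : ℝ} (hα : 0 < α) (hβ : 0 < β) (hαβ : α + β = 1) (n : ℕ) :
    PL α β (Fin n → ℝ) volume := by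
  induction n with
  | zero =>
    intro f g h hf hg hh hle
    rw [volume_pi, Measure.pi_of_empty (x := 0), lintegral_dirac, lintegral_dirac, lintegral_dirac]
    refine (hle 0 0).trans (by simp)
  | succ n ih =>
    have e := (volume_preserving_piFinSuccAbove (fun _ : Fin (n + 1) => ℝ) 0).symm
    refine pl_equiv _ e ?_ (pl_prod (pl1 hα hβ hαβ) ih)
    intro x y
    apply (MeasurableEquiv.piFinSuccAbove (fun _ : Fin (n + 1) => ℝ) 0).injective
    rw [MeasurableEquiv.apply_symm_apply]
    ext i
    · simp [MeasurableEquiv.piFinSuccAbove]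
    · simp [MeasurableEquiv.piFinSuccAbove, Fin.tail]

theorem pl_euclid {α β : ℝ} (hα : 0 < α) (hβ : 0 < β) (hαβ : α + β = 1) (n : ℕ) :
    PL α β (EuclideanSpace ℝ (Fin n)) volume :=
  pl_equiv _ (PiLp.volume_preserving_toLp (Fin n)) (fun x y => by simp)
    (pl_pi hα hβ hαβ n)

/-- Brunn-Minkowski with a ball. -/
theorem bm_ball {d : ℕ} {A S : Set (EuclideanSpace ℝ (Fin d))} (hA : MeasurableSet A)
    (hS : MeasurableSet S) (hAn : A.Nonempty) {u ρ : ℝ} (hu : 0 ≤ u) (hρ : 0 ≤ ρ)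
    (hvol : volume (Metric.ball (0 : EuclideanSpace ℝ (Fin d)) u) ≤ volume A)
    (hsub : ∀ y ∈ A, ∀ x, ‖x - y‖ ≤ ρ → x ∈ S) :
    volume (Metric.ball (0 : EuclideanSpace ℝ (Fin d)) (u + ρ)) ≤ volume S := by
  rcases hρ.eq_or_lt with rfl | hρ
  · rw [add_zero]
    exact hvol.trans (measure_mono fun y hy => hsub y hy y (by simp))
  rcases hu.eq_or_lt with rfl | hu
  · obtain ⟨y, hy⟩ := hAn
    rw [zero_add, ← Measure.addHaar_ball_center volume y]
    refine measure_mono fun x hx => hsub y hy x ?_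
    rw [Metric.mem_ball, dist_eq_norm] at hx
    exact hx.le
  set α := u / (u + ρ) with hαd
  set β := ρ / (u + ρ) with hβd
  have hα : 0 < α := by positivity
  have hβ : 0 < β := by positivity
  have hαβ : α + β = 1 := by rw [hαd, hβd]; field_simp
  have hBm : MeasurableSet (Metric.ball (0 : EuclideanSpace ℝ (Fin d)) (u + ρ)) :=
    Metric.isOpen_ball.measurableSet
  have hA' : MeasurableSet (α⁻¹ • A) := hA.const_smul₀ _
  have key := pl_euclid hα hβ hαβ d ((α⁻¹ • A).indicator 1)
    ((Metric.ball (0 : EuclideanSpace ℝ (Fin d)) (u + ρ)).indicator 1) (S.indicator 1)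
    (measurable_one.indicator hA') (measurable_one.indicator hBm) (measurable_one.indicator hS)
    (by
      intro x y
      by_cases hx : x ∈ α⁻¹ • A
      · by_cases hy : y ∈ Metric.ball (0 : EuclideanSpace ℝ (Fin d)) (u + ρ)
        · have : α • x + β • y ∈ S := by
            rw [mem_inv_smul_set_iff₀ hα.ne'] at hx
            refine hsub _ hx _ ?_
            rw [add_sub_cancel_left, norm_smul, Real.norm_of_nonneg hβ.le]
            rw [mem_ball_zero_iff] at hy
            calc β * ‖y‖ ≤ β * (u + ρ) := by gcongr
              _ = ρ := by rw [hβd]; field_simp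
          simp [hx, hy, this]
        · simp [hy, hβ]
      · simp [hx, hα])
  rw [lintegral_indicator_one hA', lintegral_indicator_one hBm, lintegral_indicator_one hS] at key
  refine le_trans ?_ key
  have hv : volume (Metric.ball (0 : EuclideanSpace ℝ (Fin d)) (u + ρ)) ≤ volume (α⁻¹ • A) := by
    rw [Measure.addHaar_smul]
    calc volume (Metric.ball (0 : EuclideanSpace ℝ (Fin d)) (u + ρ))
        = volume (α⁻¹ • Metric.ball (0 : EuclideanSpace ℝ (Fin d)) u) := by
          rw [smul_ball (by positivity), smul_zero, Real.norm_of_nonneg (by positivity)]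
          congr 2
          rw [hαd]; field_simp
      _ ≤ _ := by
          rw [Measure.addHaar_smul]
          gcongr
  set W := volume (Metric.ball (0 : EuclideanSpace ℝ (Fin d)) (u + ρ)) with hW
  have hW0 : W ≠ 0 := (Metric.measure_ball_pos _ _ (by positivity)).ne'
  have hWt : W ≠ ∞ := measure_ball_lt_top.ne
  calc W = W ^ α * W ^ β := by
        rw [← ENNReal.rpow_add _ _ hW0 hWt, hαβ, ENNReal.rpow_one]
    _ ≤ _ := by gcongr

end GFK


namespace GFK
open scoped ENNReal Topology Pointwise

/-- Quadratic sup-convolution. -/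
noncomputable def Q {d : ℕ} (c : ℝ) (k : EuclideanSpace ℝ (Fin d) → ℝ)
    (x : EuclideanSpace ℝ (Fin d)) : ℝ := ⨆ y, (k y - c * ‖x - y‖ ^ 2)

section
variable {d : ℕ} {c M : ℝ} {k : EuclideanSpace ℝ (Fin d) → ℝ}

theorem Q_bdd (hc : 0 ≤ c) (hk : ∀ x, k x ≤ M) (x : EuclideanSpace ℝ (Fin d)) :
    BddAbove (range fun y => k y - c * ‖x - y‖ ^ 2) := by
  refine ⟨M, ?_⟩
  rintro _ ⟨y, rfl⟩
  have := hk y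
  have : 0 ≤ c * ‖x - y‖ ^ 2 := by positivity
  simp only
  linarith

theorem le_Q (hc : 0 ≤ c) (hk : ∀ x, k x ≤ M) (x y : EuclideanSpace ℝ (Fin d)) :
    k y - c * ‖x - y‖ ^ 2 ≤ Q c k x := le_ciSup (Q_bdd hc hk x) y

theorem self_le_Q (hc : 0 ≤ c) (hk : ∀ x, k x ≤ M) (x : EuclideanSpace ℝ (Fin d)) :
    k x ≤ Q c k x := by simpa using le_Q hc hk x x

theorem lt_Q_iff (hc : 0 ≤ c) (hk : ∀ x, k x ≤ M) (x : EuclideanSpace ℝ (Fin d)) {a : ℝ} :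
    a < Q c k x ↔ ∃ y, a < k y - c * ‖x - y‖ ^ 2 := lt_ciSup_iff (Q_bdd hc hk x)

theorem Q_le (hc : 0 ≤ c) (hk : ∀ x, k x ≤ M) (x : EuclideanSpace ℝ (Fin d)) :
    Q c k x ≤ M := by
  refine ciSup_le fun y => ?_
  have := hk y
  have : 0 ≤ c * ‖x - y‖ ^ 2 := by positivity
  linarith

theorem Q_measurable (hc : 0 ≤ c) (hk : ∀ x, k x ≤ M) : Measurable (Q c k) := by
  refine measurable_of_Ioi fun a => ?_
  have : Q c k ⁻¹' Ioi a = ⋃ y, {x | a < k y - c * ‖x - y‖ ^ 2} := by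
    ext x
    simp only [mem_preimage, mem_Ioi, lt_Q_iff hc hk, mem_iUnion, mem_ofPred_eq]
  rw [this]
  exact (isOpen_iUnion fun y => isOpen_lt continuous_const (by fun_prop)).measurableSet

end

/-- Symmetric decreasing rearrangement. -/
noncomputable def rearr {d : ℕ} (k : EuclideanSpace ℝ (Fin d) → ℝ)
    (x : EuclideanSpace ℝ (Fin d)) : ℝ :=
  sSup {a : ℝ | a = 0 ∨ (0 ≤ a ∧
    volume (Metric.ball (0 : EuclideanSpace ℝ (Fin d)) ‖x‖) < volume {y | a < k y})}

section
variable {d : ℕ} {M : ℝ} {k : EuclideanSpace ℝ (Fin d) → ℝ}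

theorem rearr_mem_le (hk0 : ∀ x, 0 ≤ k x) (hk : ∀ x, k x ≤ M) (x : EuclideanSpace ℝ (Fin d)) :
   ∀ a ∈ {a : ℝ | a = 0 ∨ (0 ≤ a ∧
    volume (Metric.ball (0 : EuclideanSpace ℝ (Fin d)) ‖x‖) < volume {y | a < k y})}, a ≤ M := by
  rintro a (rfl | ⟨h0, h⟩)
  · exact (hk0 0).trans (hk 0)
  · have : (volume {y | a < k y}) ≠ 0 := (bot_le.trans_lt h).ne'
    obtain ⟨y, hy⟩ := nonempty_of_measure_ne_zero this
    exact (le_of_lt hy).trans (hk y)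

theorem rearr_bdd (hk0 : ∀ x, 0 ≤ k x) (hk : ∀ x, k x ≤ M) (x : EuclideanSpace ℝ (Fin d)) :
   BddAbove {a : ℝ | a = 0 ∨ (0 ≤ a ∧
    volume (Metric.ball (0 : EuclideanSpace ℝ (Fin d)) ‖x‖) < volume {y | a < k y})} :=
  ⟨M, rearr_mem_le hk0 hk x⟩

theorem rearr_nonneg (hk0 : ∀ x, 0 ≤ k x) (hk : ∀ x, k x ≤ M) (x : EuclideanSpace ℝ (Fin d)) :
    0 ≤ rearr k x := le_csSup (rearr_bdd hk0 hk x) (Or.inl rfl)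

theorem rearr_le (hk0 : ∀ x, 0 ≤ k x) (hk : ∀ x, k x ≤ M) (x : EuclideanSpace ℝ (Fin d)) :
    rearr k x ≤ M := csSup_le ⟨0, Or.inl rfl⟩ (rearr_mem_le hk0 hk x)

theorem of_lt_rearr {b : ℝ} (hb : 0 ≤ b) {x : EuclideanSpace ℝ (Fin d)} (h : b < rearr k x) :
    volume (Metric.ball (0 : EuclideanSpace ℝ (Fin d)) ‖x‖) < volume {y | b < k y} := by
  unfold rearr at h
  obtain ⟨a, ha, hba⟩ := exists_lt_of_lt_csSup ⟨(0 : ℝ), Or.inl rfl⟩ h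
  rcases ha with rfl | ⟨_, ha⟩
  · exact absurd hba hb.not_gt
  · exact ha.trans_le (measure_mono fun y hy => hba.trans hy)

theorem lt_rearr (hk0 : ∀ x, 0 ≤ k x) (hk : ∀ x, k x ≤ M) {b : ℝ} (hb : 0 ≤ b)
    {x : EuclideanSpace ℝ (Fin d)}
    (h : volume (Metric.ball (0 : EuclideanSpace ℝ (Fin d)) ‖x‖) < volume {y | b < k y}) :
    b < rearr k x := by
  have hU : {y | b < k y} = ⋃ n : ℕ, {y | b + 1 / ((n : ℝ) + 1) < k y} := by
    ext y
    simp only [mem_ofPred_eq, mem_iUnion]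
    constructor
    · intro hy
      obtain ⟨n, hn⟩ := exists_nat_one_div_lt (sub_pos.2 hy)
      exact ⟨n, by linarith⟩
    · rintro ⟨n, hn⟩
      have : 0 < 1 / ((n : ℝ) + 1) := by positivity
      linarith
  have hmono : Monotone fun n : ℕ => {y | b + 1 / ((n : ℝ) + 1) < k y} := by
    intro m n hmn y hy
    simp only [mem_ofPred_eq] at *
    refine lt_of_le_of_lt ?_ hy
    gcongr
  rw [hU, hmono.measure_iUnion] at h
  obtain ⟨n, hn⟩ := lt_iSup_iff.1 h
  have hp : 0 < 1 / ((n : ℝ) + 1) := by positivity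
  have : b + 1 / ((n : ℝ) + 1) ≤ rearr k x :=
    le_csSup (rearr_bdd hk0 hk x) (Or.inr ⟨by linarith, hn⟩)
  linarith

theorem rearr_anti (hk0 : ∀ x, 0 ≤ k x) (hk : ∀ x, k x ≤ M) {x y : EuclideanSpace ℝ (Fin d)}
    (h : ‖x‖ ≤ ‖y‖) : rearr k y ≤ rearr k x := by
  refine csSup_le_csSup (rearr_bdd hk0 hk x) ⟨0, Or.inl rfl⟩ ?_
  rintro a (rfl | ⟨h0, ha⟩)
  · exact Or.inl rfl
  · exact Or.inr ⟨h0, lt_of_le_of_lt (measure_mono (Metric.ball_subset_ball h)) ha⟩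

theorem rearr_measurable (hk0 : ∀ x, 0 ≤ k x) (hk : ∀ x, k x ≤ M) : Measurable (rearr k) := by
  refine measurable_of_Ioi fun a => ?_
  have hoc : OrdConnected {r : ℝ | ∃ x : EuclideanSpace ℝ (Fin d), r ≤ ‖x‖ ∧ a < rearr k x} := by
    refine ⟨fun r hr t ht u hu => ?_⟩
    obtain ⟨x, hx, hx'⟩ := ht
    exact ⟨x, hu.2.trans hx, hx'⟩
  have : rearr k ⁻¹' Ioi a = (fun x => ‖x‖) ⁻¹' {r : ℝ | ∃ x : EuclideanSpace ℝ (Fin d), r ≤ ‖x‖ ∧ a < rearr k x} := by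
    ext x
    simp only [mem_preimage, mem_Ioi, mem_ofPred_eq]
    constructor
    · intro h; exact ⟨x, le_rfl, h⟩
    · rintro ⟨y, hy, h⟩
      exact h.trans_le (rearr_anti hk0 hk hy)
  rw [this]
  exact measurable_norm hoc.measurableSet

theorem exists_ball_vol (hd : 1 ≤ d) {m : ℝ≥0∞} (hm : m ≠ ∞) :
    ∃ R : ℝ, 0 ≤ R ∧ volume (Metric.ball (0 : EuclideanSpace ℝ (Fin d)) R) = m := by
  have : Nonempty (Fin d) := ⟨⟨0, hd⟩⟩
  set W := volume (Metric.ball (0 : EuclideanSpace ℝ (Fin d)) 1) with hW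
  have hW0 : W ≠ 0 := (Metric.measure_ball_pos _ _ one_pos).ne'
  have hWt : W ≠ ∞ := measure_ball_lt_top.ne
  have hR0 : 0 ≤ ((m / W).toReal) ^ ((d : ℝ)⁻¹) := by positivity
  refine ⟨((m / W).toReal) ^ ((d : ℝ)⁻¹), hR0, ?_⟩
  rw [Measure.addHaar_ball _ _ hR0, ← hW, finrank_euclideanSpace, Fintype.card_fin,
    Real.rpow_inv_natCast_pow ENNReal.toReal_nonneg (by omega), ENNReal.ofReal_toReal,
    ENNReal.div_mul_cancel hW0 hWt]
  exact ENNReal.div_ne_top hm hW0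

theorem vol_ball_lt {u R : ℝ} (h : volume (Metric.ball (0 : EuclideanSpace ℝ (Fin d)) u) <
    volume (Metric.ball (0 : EuclideanSpace ℝ (Fin d)) R)) : u < R := by
  by_contra! hh
  exact absurd h (measure_mono (Metric.ball_subset_ball hh)).not_gt

theorem vol_ball_strict (hd : 1 ≤ d) {u R : ℝ} (hu : 0 ≤ u) (h : u < R) :
    volume (Metric.ball (0 : EuclideanSpace ℝ (Fin d)) u) <
    volume (Metric.ball (0 : EuclideanSpace ℝ (Fin d)) R) := by
  have : Nonempty (Fin d) := ⟨⟨0, hd⟩⟩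
  rw [Measure.addHaar_ball _ _ hu, Measure.addHaar_ball _ _ (hu.trans h.le)]
  refine (ENNReal.mul_lt_mul_iff_left (Metric.measure_ball_pos _ _ one_pos).ne'
    measure_ball_lt_top.ne).2 ?_
  rw [finrank_euclideanSpace, Fintype.card_fin]
  exact (ENNReal.ofReal_lt_ofReal_iff (pow_pos (hu.trans_lt h) _)).2
    (pow_lt_pow_left₀ h hu (by omega))

theorem rearr_level (hd : 1 ≤ d) (hk0 : ∀ x, 0 ≤ k x) (hk : ∀ x, k x ≤ M)
    (hfin : volume {y | 0 < k y} ≠ ∞) {b : ℝ} (hb : 0 ≤ b) :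
    volume {y | b < k y} ≤ volume {y | b < rearr k y} := by
  have hf : volume {y | b < k y} ≠ ∞ :=
    ne_top_of_le_ne_top hfin (measure_mono fun y hy => lt_of_le_of_lt hb hy)
  obtain ⟨R, hR, hRv⟩ := exists_ball_vol hd hf
  rw [← hRv]
  refine measure_mono fun y hy => lt_rearr hk0 hk hb ?_
  rw [← hRv]
  exact vol_ball_strict hd (norm_nonneg _) (by simpa using hy)

theorem level_lintegral {u v : EuclideanSpace ℝ (Fin d) → ℝ} (hu : Measurable u) (hv : Measurable v)
    (hu0 : ∀ x, 0 ≤ u x) (hv0 : ∀ x, 0 ≤ v x)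
    (h : ∀ b, 0 ≤ b → volume {y | b < u y} ≤ volume {y | b < v y}) :
    ∫⁻ x, ENNReal.ofReal (u x) ≤ ∫⁻ x, ENNReal.ofReal (v x) := by
  rw [lintegral_eq_lintegral_meas_lt _ (Eventually.of_forall hu0) hu.aemeasurable,
    lintegral_eq_lintegral_meas_lt _ (Eventually.of_forall hv0) hv.aemeasurable]
  exact setLIntegral_mono' measurableSet_Ioi fun t ht => h t (le_of_lt ht)

theorem level_lintegral_sq {u v : EuclideanSpace ℝ (Fin d) → ℝ} (hu : Measurable u) (hv : Measurable v)
    (hu0 : ∀ x, 0 ≤ u x) (hv0 : ∀ x, 0 ≤ v x)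
    (h : ∀ b, 0 ≤ b → volume {y | b < u y} ≤ volume {y | b < v y}) :
    ∫⁻ x, ENNReal.ofReal (u x ^ 2) ≤ ∫⁻ x, ENNReal.ofReal (v x ^ 2) := by
  refine level_lintegral (hu.pow_const 2) (hv.pow_const 2) (fun x => sq_nonneg _)
    (fun x => sq_nonneg _) fun b hb => ?_
  have : ∀ w : EuclideanSpace ℝ (Fin d) → ℝ, (∀ x, 0 ≤ w x) → {y | b < w y ^ 2} = {y | √b < w y} := by
    intro w hw
    ext y
    simp only [mem_ofPred_eq]
    exact (Real.sqrt_lt_sqrt_iff hb).symm.trans (by rw [Real.sqrt_sq (hw y)])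
  rw [this u hu0, this v hv0]
  exact h _ (Real.sqrt_nonneg b)

theorem Q_rearr (hd : 1 ≤ d) (hk0 : ∀ x, 0 ≤ k x) (hk : ∀ x, k x ≤ M) (hkm : Measurable k)
    {c : ℝ} (hc : 0 ≤ c) :
    ∫⁻ x, ENNReal.ofReal (Q c (rearr k) x) ≤ ∫⁻ x, ENNReal.ofReal (Q c k x) := by
  have : Nonempty (Fin d) := ⟨⟨0, hd⟩⟩
  have hr := rearr_le hk0 hk
  refine level_lintegral (Q_measurable hc hr) (Q_measurable hc hk)
    (fun x => (rearr_nonneg hk0 hk x).trans (self_le_Q hc hr x))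
    (fun x => (hk0 x).trans (self_le_Q hc hk x)) fun a ha => ?_
  by_cases hf : volume {y | a < Q c k y} = ∞
  · rw [hf]; exact le_top
  obtain ⟨R, hR, hRv⟩ := exists_ball_vol hd hf
  rw [← hRv, ← Measure.addHaar_closedBall_eq_addHaar_ball]
  refine measure_mono fun x hx => ?_
  obtain ⟨y, hy⟩ := (lt_Q_iff hc hr x).1 hx
  have hb : 0 ≤ a + c * ‖x - y‖ ^ 2 := by positivity
  have h1 := of_lt_rearr hb (x := y) (k := k) (by linarith)
  have h2 := bm_ball (A := {z | a + c * ‖x - y‖ ^ 2 < k z}) (S := {z | a < Q c k z})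
    (measurableSet_lt measurable_const hkm) (measurableSet_lt measurable_const (Q_measurable hc hk))
    (nonempty_of_measure_ne_zero (bot_le.trans_lt h1).ne') (norm_nonneg y) (norm_nonneg (x - y))
    h1.le (by
      intro z hz w hw
      simp only [mem_ofPred_eq] at *
      refine lt_of_lt_of_le ?_ (le_Q hc hk w z)
      have : c * ‖w - z‖ ^ 2 ≤ c * ‖x - y‖ ^ 2 := by gcongr
      linarith)
  rw [← hRv] at h2
  have h3 : ‖y‖ + ‖x - y‖ ≤ R := by
    by_contra! hh
    exact absurd h2 (vol_ball_strict hd hR hh).not_ge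
  rw [mem_closedBall_zero_iff]
  calc ‖x‖ = ‖y + (x - y)‖ := by simp
    _ ≤ _ := (norm_add_le _ _).trans h3

end
end GFK


namespace GFK
open scoped ENNReal Topology Pointwise Convolution

section
variable {d : ℕ}

theorem norm_gradient {F : Type*} [NormedAddCommGroup F] [InnerProductSpace ℝ F] [CompleteSpace F]
    (g : F → ℝ) (x : F) :
    ‖gradient g x‖ = ‖fderiv ℝ g x‖ := by
  unfold gradient
  exact LinearIsometryEquiv.norm_map _ _

theorem fderiv_gradient (g : EuclideanSpace ℝ (Fin d) → ℝ) (x : EuclideanSpace ℝ (Fin d)) :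
    fderiv ℝ g x (gradient g x) = ‖gradient g x‖ ^ 2 := by
  rw [← real_inner_self_eq_norm_sq]
  conv_rhs => enter [2]; unfold gradient
  rw [InnerProductSpace.toDual_symm_apply]

theorem taylor {g : EuclideanSpace ℝ (Fin d) → ℝ} (hg : ContDiff ℝ (⊤ : ℕ∞) g)
    (hc : HasCompactSupport g) :
    ∃ K : ℝ, 0 ≤ K ∧ ∀ x y, |g y - g x - fderiv ℝ g x (y - x)| ≤ K * ‖y - x‖ ^ 2 := by
  have h1 : ContDiff ℝ 1 (fderiv ℝ g) := hg.fderiv_right (by norm_cast)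
  obtain ⟨K, hK⟩ := h1.lipschitzWith_of_hasCompactSupport (hc.fderiv ℝ) (by simp)
  refine ⟨K, K.2, fun x y => ?_⟩
  have := (convex_closedBall x ‖y - x‖).norm_image_sub_le_of_norm_hasFDerivWithin_le' (f := g)
    (f' := fderiv ℝ g) (φ := fderiv ℝ g x) (C := K * ‖y - x‖) (x := x) (y := y)
    (fun z _ => (hg.differentiable (by simp) z).hasFDerivAt.hasFDerivWithinAt)
    (fun z hz => by
      have := hK.dist_le_mul z x
      rw [dist_eq_norm, dist_eq_norm] at this
      rw [Metric.mem_closedBall, dist_eq_norm] at hz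
      exact this.trans (by gcongr))
    (Metric.mem_closedBall_self (norm_nonneg _))
    (by rw [Metric.mem_closedBall, dist_eq_norm])
  rw [Real.norm_eq_abs] at this
  refine this.trans (le_of_eq (by ring))

theorem Q_upper {g : EuclideanSpace ℝ (Fin d) → ℝ} {K c : ℝ} (hcK : K < c)
    (hT : ∀ x y, |g y - g x - fderiv ℝ g x (y - x)| ≤ K * ‖y - x‖ ^ 2)
    (x : EuclideanSpace ℝ (Fin d)) :
    Q c (fun y => |g y|) x ≤ |g x| + (1 / (4 * (c - K))) * ‖gradient g x‖ ^ 2 := by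
  refine ciSup_le fun y => ?_
  have h1 := hT x y
  have h2 := (fderiv ℝ g x).le_opNorm (y - x)
  rw [Real.norm_eq_abs, ← norm_gradient] at h2
  rw [norm_sub_rev x y]
  set r := ‖y - x‖
  set n := ‖gradient g x‖
  have h3 : |g y| - |g x| ≤ n * r + K * r ^ 2 := by
    have e : g y = g x + (fderiv ℝ g x (y - x) + (g y - g x - fderiv ℝ g x (y - x))) := by ring
    have := abs_add_le (g x) (fderiv ℝ g x (y - x) + (g y - g x - fderiv ℝ g x (y - x)))
    rw [← e] at this
    have := abs_add_le (fderiv ℝ g x (y - x)) (g y - g x - fderiv ℝ g x (y - x))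
    linarith
  have hp : 0 < c - K := sub_pos.2 hcK
  have h4 : n * r - (c - K) * r ^ 2 ≤ 1 / (4 * (c - K)) * n ^ 2 := by
    rw [one_div, inv_mul_eq_div, le_div_iff₀ (by positivity)]
    nlinarith [sq_nonneg (n - 2 * (c - K) * r)]
  linarith

theorem Q_lower {g : EuclideanSpace ℝ (Fin d) → ℝ} {K c M : ℝ} (hc : 0 < c)
    (hM : ∀ x, g x ≤ M)
    (hT : ∀ x y, |g y - g x - fderiv ℝ g x (y - x)| ≤ K * ‖y - x‖ ^ 2)
    (x : EuclideanSpace ℝ (Fin d)) :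
    g x + (1 / (4 * c) * (1 - K / c)) * ‖gradient g x‖ ^ 2 ≤ Q c g x := by
  refine le_trans ?_ (le_Q hc.le hM x (x + (1 / (2 * c)) • gradient g x))
  have h1 := hT x (x + (1 / (2 * c)) • gradient g x)
  rw [add_sub_cancel_left, map_smul, fderiv_gradient, norm_smul, Real.norm_of_nonneg (by positivity),
    smul_eq_mul] at h1
  have h2 : ‖x - (x + (1 / (2 * c)) • gradient g x)‖ = 1 / (2 * c) * ‖gradient g x‖ := by
    rw [norm_sub_rev, add_sub_cancel_left, norm_smul, Real.norm_of_nonneg (by positivity)]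
  rw [h2]
  have h3 := (abs_le.1 h1).1
  have e : (1 / (4 * c) * (1 - K / c)) * ‖gradient g x‖ ^ 2 =
    1 / (2 * c) * ‖gradient g x‖ ^ 2 - K * (1 / (2 * c) * ‖gradient g x‖) ^ 2
     - c * (1 / (2 * c) * ‖gradient g x‖) ^ 2 := by
    field_simp
    ring
  rw [e]
  linarith

theorem tonelli_conv {φ : EuclideanSpace ℝ (Fin d) → ℝ} {F : EuclideanSpace ℝ (Fin d) → ℝ≥0∞}
    (hφ : Measurable φ) (hF : Measurable F) (h1 : ∫⁻ z, ENNReal.ofReal (φ z) = 1) :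
    ∫⁻ x, ∫⁻ z, ENNReal.ofReal (φ z) * F (x - z) = ∫⁻ x, F x := by
  rw [lintegral_lintegral_swap]
  · have : ∀ z, ∫⁻ x, ENNReal.ofReal (φ z) * F (x - z) = ENNReal.ofReal (φ z) * ∫⁻ x, F x := by
      intro z
      rw [lintegral_const_mul _ (show Measurable fun x => F (x - z) from
        hF.comp (measurable_id.sub_const z)),
        lintegral_sub_right_eq_self F z]
    simp_rw [this]
    rw [lintegral_mul_const _ hφ.ennreal_ofReal, h1, one_mul]
  · refine Measurable.aemeasurable ?_
    exact (hφ.comp measurable_snd).ennreal_ofReal.mul (hF.comp (measurable_fst.sub measurable_snd))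

/-- The mollification. -/
noncomputable def moll (φ : ContDiffBump (0 : EuclideanSpace ℝ (Fin d)))
    (h : EuclideanSpace ℝ (Fin d) → ℝ) : EuclideanSpace ℝ (Fin d) → ℝ :=
  (φ.normed volume ⋆[ContinuousLinearMap.lsmul ℝ ℝ, volume] h)

variable {φ : ContDiffBump (0 : EuclideanSpace ℝ (Fin d))} {h : EuclideanSpace ℝ (Fin d) → ℝ}
  {M : ℝ}

theorem moll_apply (x : EuclideanSpace ℝ (Fin d)) :
    moll φ h x = ∫ z, φ.normed volume z * h (x - z) := by
  simp [moll, convolution]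

theorem bd_integrable {F : EuclideanSpace ℝ (Fin d) → ℝ} (hF : Measurable F)
    (h0 : ∀ x, 0 ≤ F x) (hM : ∀ x, F x ≤ M) (x : EuclideanSpace ℝ (Fin d)) :
    Integrable fun z => φ.normed volume z * F (x - z) := by
  refine φ.integrable_normed.mul_bdd (c := M)
    (hF.comp (measurable_const.sub measurable_id)).aestronglyMeasurable ?_
  refine Eventually.of_forall fun z => ?_
  rw [Real.norm_of_nonneg (h0 _)]
  exact hM _

theorem normed_lint : ∫⁻ z, ENNReal.ofReal (φ.normed volume z) = 1 := by
  rw [← ofReal_integral_eq_lintegral_ofReal φ.integrable_normed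
    (Eventually.of_forall fun z => φ.nonneg_normed z), φ.integral_normed, ENNReal.ofReal_one]

theorem moll_ofReal {F : EuclideanSpace ℝ (Fin d) → ℝ} (hF : Measurable F)
    (h0 : ∀ x, 0 ≤ F x) (hM : ∀ x, F x ≤ M) (x : EuclideanSpace ℝ (Fin d)) :
    ENNReal.ofReal (∫ z, φ.normed volume z * F (x - z)) =
      ∫⁻ z, ENNReal.ofReal (φ.normed volume z) * ENNReal.ofReal (F (x - z)) := by
  rw [ofReal_integral_eq_lintegral_ofReal (bd_integrable hF h0 hM x)
    (Eventually.of_forall fun z => mul_nonneg (φ.nonneg_normed z) (h0 _))]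
  simp_rw [ENNReal.ofReal_mul (φ.nonneg_normed _)]

theorem moll_lintegral (hh : Measurable h) (h0 : ∀ x, 0 ≤ h x) (hM : ∀ x, h x ≤ M) :
    ∫⁻ x, ENNReal.ofReal (moll φ h x) = ∫⁻ x, ENNReal.ofReal (h x) := by
  simp_rw [moll_apply, moll_ofReal hh h0 hM]
  exact tonelli_conv φ.continuous_normed.measurable hh.ennreal_ofReal normed_lint

theorem moll_nonneg (h0 : ∀ x, 0 ≤ h x) (x : EuclideanSpace ℝ (Fin d)) : 0 ≤ moll φ h x := by
  rw [moll_apply]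
  exact integral_nonneg fun z => mul_nonneg (φ.nonneg_normed z) (h0 _)

theorem moll_le (hh : Measurable h) (h0 : ∀ x, 0 ≤ h x) (hM : ∀ x, h x ≤ M)
    (x : EuclideanSpace ℝ (Fin d)) : moll φ h x ≤ M := by
  rw [moll_apply]
  calc ∫ z, φ.normed volume z * h (x - z) ≤ ∫ z, φ.normed volume z * M := by
        refine integral_mono (bd_integrable hh h0 hM x) (φ.integrable_normed.mul_const M) fun z => ?_
        exact mul_le_mul_of_nonneg_left (hM _) (φ.nonneg_normed z)
    _ = M := by rw [integral_mul_const, φ.integral_normed, one_mul]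

theorem Q_moll (hh : Measurable h) (h0 : ∀ x, 0 ≤ h x) (hM : ∀ x, h x ≤ M) {c : ℝ} (hc : 0 ≤ c) :
    ∫⁻ x, ENNReal.ofReal (Q c (moll φ h) x) ≤ ∫⁻ x, ENNReal.ofReal (Q c h x) := by
  have hQm := Q_measurable hc hM
  have hQ0 : ∀ x, 0 ≤ Q c h x := fun x => (h0 x).trans (self_le_Q hc hM x)
  have hQM := Q_le hc hM
  rw [← tonelli_conv φ.continuous_normed.measurable hQm.ennreal_ofReal (normed_lint (φ := φ))]
  simp_rw [← moll_ofReal hQm hQ0 hQM]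
  refine lintegral_mono fun x => ENNReal.ofReal_le_ofReal ?_
  refine ciSup_le fun y => ?_
  have e : moll φ h y - c * ‖x - y‖ ^ 2 =
      ∫ z, φ.normed volume z * h (y - z) - φ.normed volume z * (c * ‖x - y‖ ^ 2) := by
    rw [integral_sub (bd_integrable hh h0 hM y) (φ.integrable_normed.mul_const _),
      integral_mul_const, φ.integral_normed, one_mul, moll_apply]
  rw [e]
  refine integral_mono ((bd_integrable hh h0 hM y).sub (φ.integrable_normed.mul_const _))
    (bd_integrable hQm hQ0 hQM x) fun z => ?_
  simp only
  rw [← mul_sub]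
  refine mul_le_mul_of_nonneg_left ?_ (φ.nonneg_normed z)
  have := le_Q hc hM (x - z) (y - z)
  rwa [sub_sub_sub_cancel_right] at this

theorem moll_contDiff (hh : Measurable h) (h0 : ∀ x, 0 ≤ h x) (hM : ∀ x, h x ≤ M) :
    ContDiff ℝ (⊤ : ℕ∞) (moll φ h) := by
  have hl : LocallyIntegrable h volume := by
    refine (locallyIntegrable_const M).mono hh.aestronglyMeasurable (Eventually.of_forall fun x => ?_)
    rw [Real.norm_of_nonneg (h0 x)]
    exact (hM x).trans (le_abs_self M)
  exact φ.hasCompactSupport_normed.contDiff_convolution_left _ φ.contDiff_normed hl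

theorem moll_support {R : ℝ} (hR : ∀ x, h x ≠ 0 → ‖x‖ < R) (x : EuclideanSpace ℝ (Fin d))
    (hx : moll φ h x ≠ 0) : ‖x‖ < R + φ.rOut := by
  rw [moll_apply] at hx
  have : ∃ z, φ.normed volume z * h (x - z) ≠ 0 := by
    by_contra! hh
    simp [hh] at hx
  obtain ⟨z, hz⟩ := this
  have h1 := left_ne_zero_of_mul hz
  have h2 := hR _ (right_ne_zero_of_mul hz)
  have h3 : z ∈ Function.support (φ.normed volume) := h1
  rw [φ.support_normed_eq, mem_ball_zero_iff] at h3
  calc ‖x‖ = ‖(x - z) + z‖ := by simp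
    _ ≤ _ := norm_add_le _ _
    _ < _ := by linarith

theorem moll_tsupport {R : ℝ} (hR : ∀ x, h x ≠ 0 → ‖x‖ < R) :
    tsupport (moll φ h) ⊆ Metric.closedBall 0 (R + φ.rOut) := by
  refine closure_minimal (fun x hx => ?_) Metric.isClosed_closedBall
  rw [mem_closedBall_zero_iff]
  exact (moll_support hR x hx).le

theorem grad_sq_integrable {g : EuclideanSpace ℝ (Fin d) → ℝ} (hg : ContDiff ℝ (⊤ : ℕ∞) g)
    (hc : HasCompactSupport g) : Integrable fun x => ‖gradient g x‖ ^ 2 := by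
  simp_rw [norm_gradient]
  refine Continuous.integrable_of_hasCompactSupport ?_ ?_
  · have := hg.continuous_fderiv (by simp)
    fun_prop
  · exact (hc.fderiv ℝ).comp_left (g := fun L => ‖L‖ ^ 2) (by simp)

/-- Polya-Szego in mollified form. -/
theorem polya {g : EuclideanSpace ℝ (Fin d) → ℝ} (hd : 1 ≤ d) (hg : ContDiff ℝ (⊤ : ℕ∞) g)
    (hgc : HasCompactSupport g) (hM : ∀ x, |g x| ≤ M) (hfin : volume {y | 0 < |g y|} ≠ ∞)
    {R : ℝ} (hR : ∀ x, rearr (fun y => |g y|) x ≠ 0 → ‖x‖ < R) :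
    ∫ x, ‖gradient (moll φ (rearr fun y => |g y|)) x‖ ^ 2 ≤ ∫ x, ‖gradient g x‖ ^ 2 := by
  set k : EuclideanSpace ℝ (Fin d) → ℝ := fun y => |g y| with hk
  have hk0 : ∀ x, 0 ≤ k x := fun x => abs_nonneg _
  have hkm : Measurable k := hg.continuous.abs.measurable
  set h := rearr k with hh
  have h0 := rearr_nonneg hk0 hM
  have hhM := rearr_le hk0 hM
  have hhm : Measurable h := rearr_measurable hk0 hM
  set ψ := moll φ h with hψ
  have ψ0 : ∀ x, 0 ≤ ψ x := moll_nonneg h0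
  have ψM : ∀ x, ψ x ≤ M := moll_le hhm h0 hhM
  have ψs : ContDiff ℝ (⊤ : ℕ∞) ψ := moll_contDiff hhm h0 hhM
  have ψc : HasCompactSupport ψ :=
    HasCompactSupport.of_support_subset_isCompact (isCompact_closedBall 0 (R + φ.rOut))
      (subset_closure.trans (moll_tsupport hR))
  obtain ⟨K, hK0, hK⟩ := taylor hg hgc
  obtain ⟨K', hK'0, hK'⟩ := taylor ψs ψc
  have ki : Integrable k := (hg.continuous.integrable_of_hasCompactSupport hgc).abs
  have ψi : Integrable ψ := ψs.continuous.integrable_of_hasCompactSupport ψc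
  have gi := grad_sq_integrable hg hgc
  have gψi := grad_sq_integrable ψs ψc
  have hkψ : ∫ x, k x ≤ ∫ x, ψ x := by
    rw [← ENNReal.ofReal_le_ofReal_iff (integral_nonneg ψ0),
      ofReal_integral_eq_lintegral_ofReal ki (Eventually.of_forall hk0),
      ofReal_integral_eq_lintegral_ofReal ψi (Eventually.of_forall ψ0),
      moll_lintegral hhm h0 hhM]
    exact level_lintegral hkm hhm hk0 h0 fun b hb => rearr_level hd hk0 hM hfin hb
  set D := ∫ x, ‖gradient g x‖ ^ 2 with hD
  set D' := ∫ x, ‖gradient ψ x‖ ^ 2 with hD'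
  have hDn : 0 ≤ D := integral_nonneg fun x => sq_nonneg _
  have main : ∀ c, K < c → K' < c → (1 - K' / c) * D' ≤ 1 / (1 - K / c) * D := by
    intro c hc hc'
    have hc0 : 0 < c := hK0.trans_lt hc
    have he : 0 ≤ 1 / (4 * c) * (1 - K' / c) := by
      have : K' / c ≤ 1 := by rw [div_le_one hc0]; exact hc'.le
      have : 0 ≤ 1 - K' / c := by linarith
      positivity
    have he' : 0 ≤ 1 / (4 * (c - K)) := by
      have := sub_pos.2 hc
      positivity
    have low : ENNReal.ofReal (∫ x, (ψ x + (1 / (4 * c) * (1 - K' / c)) * ‖gradient ψ x‖ ^ 2)) ≤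
        ∫⁻ x, ENNReal.ofReal (Q c ψ x) := by
      have this : Integrable fun x => ψ x + (1 / (4 * c) * (1 - K' / c)) * ‖gradient ψ x‖ ^ 2 :=
        ψi.add (gψi.const_mul _)
      rw [ofReal_integral_eq_lintegral_ofReal this
        (Eventually.of_forall fun x => add_nonneg (ψ0 x) (by positivity))]
      exact lintegral_mono fun x => ENNReal.ofReal_le_ofReal (Q_lower hc0 ψM hK' x)
    have up : ∫⁻ x, ENNReal.ofReal (Q c k x) ≤
        ENNReal.ofReal (∫ x, (k x + (1 / (4 * (c - K))) * ‖gradient g x‖ ^ 2)) := by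
      have this : Integrable fun x => k x + (1 / (4 * (c - K))) * ‖gradient g x‖ ^ 2 :=
        ki.add (gi.const_mul _)
      rw [ofReal_integral_eq_lintegral_ofReal this
        (Eventually.of_forall fun x => add_nonneg (hk0 x) (by positivity))]
      exact lintegral_mono fun x => ENNReal.ofReal_le_ofReal (Q_upper hc hK x)
    have all := ((low.trans (Q_moll hhm h0 hhM hc0.le)).trans (Q_rearr hd hk0 hM hkm hc0.le)).trans up
    rw [ENNReal.ofReal_le_ofReal_iff
      (integral_nonneg fun x => add_nonneg (hk0 x) (by positivity)),
      integral_add ψi (gψi.const_mul _), integral_add ki (gi.const_mul _),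
      integral_const_mul, integral_const_mul] at all
    have h1 : 1 / (4 * c) * (1 - K' / c) * D' ≤ 1 / (4 * (c - K)) * D := by linarith
    have h2 := mul_le_mul_of_nonneg_left h1 (by positivity : 0 ≤ 4 * c)
    have hcK := sub_pos.2 hc
    calc (1 - K' / c) * D' = 4 * c * (1 / (4 * c) * (1 - K' / c) * D') := by field_simp
      _ ≤ _ := h2
      _ = _ := by
        have : 1 - K / c = (c - K) / c := by field_simp
        rw [this]
        field_simp
  have t0 : ∀ K : ℝ, Tendsto (fun c : ℝ => 1 - K / c) atTop (𝓝 1) := by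
    intro K
    have : Tendsto (fun c : ℝ => 1 - K / c) atTop (𝓝 (1 - 0)) :=
      tendsto_const_nhds.sub (tendsto_const_nhds.div_atTop tendsto_id)
    simpa using this
  have tl : Tendsto (fun c => (1 - K' / c) * D') atTop (𝓝 (1 * D')) := (t0 K').mul_const _
  have tr : Tendsto (fun c => 1 / (1 - K / c) * D) atTop (𝓝 (1 / 1 * D)) :=
    ((tendsto_const_nhds.div (t0 K) one_ne_zero)).mul_const _
  have := le_of_tendsto_of_tendsto tl tr (by
    filter_upwards [eventually_gt_atTop K, eventually_gt_atTop K'] with c h1 h2 using main c h1 h2)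
  simpa using this

end
end GFK


namespace GFK
open scoped ENNReal Topology

section
variable {d : ℕ}

theorem scale_smooth {f : EuclideanSpace ℝ (Fin d) → ℝ} (hf : ContDiff ℝ (⊤ : ℕ∞) f) (l : ℝ)
    (c : EuclideanSpace ℝ (Fin d)) : ContDiff ℝ (⊤ : ℕ∞) fun x => f (l • (x - c)) :=
  hf.comp ((contDiff_id.sub contDiff_const).const_smul l)

theorem scale_grad {f : EuclideanSpace ℝ (Fin d) → ℝ} (hf : ContDiff ℝ (⊤ : ℕ∞) f) {l : ℝ}
    (hl : 0 < l) (c x : EuclideanSpace ℝ (Fin d)) :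
    ‖gradient (fun x => f (l • (x - c))) x‖ = l * ‖gradient f (l • (x - c))‖ := by
  rw [norm_gradient, norm_gradient]
  have h1 : HasFDerivAt f (fderiv ℝ f (l • (x - c))) (l • (x - c)) :=
    ((hf.differentiable (by simp)) _).hasFDerivAt
  have h2 : HasFDerivAt (fun x => l • (x - c)) (l • ContinuousLinearMap.id ℝ (EuclideanSpace ℝ (Fin d))) x :=
    ((hasFDerivAt_id x).sub_const c).const_smul l
  have h3 := (h1.comp x h2).fderiv
  change ‖fderiv ℝ (f ∘ fun x => l • (x - c)) x‖ = _
  rw [h3]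
  have : (fderiv ℝ f (l • (x - c))).comp (l • ContinuousLinearMap.id ℝ (EuclideanSpace ℝ (Fin d))) =
      l • fderiv ℝ f (l • (x - c)) := by
    ext v; simp
  rw [this, norm_smul, Real.norm_of_nonneg hl.le]

theorem scale_int (F : EuclideanSpace ℝ (Fin d) → ℝ) {l : ℝ} (hl : 0 < l)
    (c : EuclideanSpace ℝ (Fin d)) : ∫ x, F (l • (x - c)) = (l ^ d)⁻¹ * ∫ x, F x := by
  rw [integral_sub_right_eq_self (fun x => F (l • x)) c,
    Measure.integral_comp_smul_of_nonneg volume F l (hR := hl.le)]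
  simp

theorem scale_tsupport (f : EuclideanSpace ℝ (Fin d) → ℝ) (l : ℝ)
    (c : EuclideanSpace ℝ (Fin d)) {x : EuclideanSpace ℝ (Fin d)}
    (hx : x ∈ tsupport fun x => f (l • (x - c))) : l • (x - c) ∈ tsupport f := by
  have : Continuous fun x : EuclideanSpace ℝ (Fin d) => l • (x - c) := by fun_prop
  exact tsupport_comp_subset_preimage f this hx

theorem scale_compact {f : EuclideanSpace ℝ (Fin d) → ℝ} (hf : HasCompactSupport f) {l : ℝ}
    (hl : 0 < l) (c : EuclideanSpace ℝ (Fin d)) :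
    HasCompactSupport fun x => f (l • (x - c)) := by
  refine HasCompactSupport.of_support_subset_isCompact (K := (fun y => l⁻¹ • y + c) '' tsupport f)
    (hf.isCompact.image (by fun_prop)) fun x hx => ?_
  refine ⟨l • (x - c), subset_closure hx, ?_⟩
  simp [smul_smul, inv_mul_cancel₀ hl.ne']

theorem sq_int {g : EuclideanSpace ℝ (Fin d) → ℝ} (hg : Continuous g)
    (hc : HasCompactSupport g) : Integrable fun x => g x ^ 2 :=
  Continuous.integrable_of_hasCompactSupport (by fun_prop)
    (hc.comp_left (g := fun t : ℝ => t ^ 2) (by simp))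

theorem sq_int_pos {g : EuclideanSpace ℝ (Fin d) → ℝ} (hg : Continuous g)
    (hc : HasCompactSupport g) (h0 : g ≠ 0) : 0 < ∫ x, g x ^ 2 := by
  rw [integral_pos_iff_support_of_nonneg (fun x => sq_nonneg _) (sq_int hg hc)]
  have : Function.support (fun x => g x ^ 2) = Function.support g := by ext; simp
  rw [this]
  exact (hg.isOpen_support).measure_pos _ (Function.support_nonempty_iff.2 h0)

theorem set_sq {g : EuclideanSpace ℝ (Fin d) → ℝ} {Ω : Set (EuclideanSpace ℝ (Fin d))}
    (h : tsupport g ⊆ Ω) : ∫ x in Ω, g x ^ 2 = ∫ x, g x ^ 2 := by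
  refine setIntegral_eq_integral_of_forall_compl_eq_zero fun x hx => ?_
  rw [image_eq_zero_of_notMem_tsupport fun hh => hx (h hh)]; simp

theorem grad_zero {g : EuclideanSpace ℝ (Fin d) → ℝ} {x : EuclideanSpace ℝ (Fin d)}
    (h : x ∉ tsupport g) : ‖gradient g x‖ = 0 := by
  rw [norm_gradient, fderiv_of_notMem_tsupport ℝ h, norm_zero]

theorem set_grad {g : EuclideanSpace ℝ (Fin d) → ℝ} {Ω : Set (EuclideanSpace ℝ (Fin d))}
    (h : tsupport g ⊆ Ω) : ∫ x in Ω, ‖gradient g x‖ ^ 2 = ∫ x, ‖gradient g x‖ ^ 2 := by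
  refine setIntegral_eq_integral_of_forall_compl_eq_zero fun x hx => ?_
  rw [grad_zero fun hh => hx (h hh)]; simp

theorem mu_nonneg (Ω : Set (EuclideanSpace ℝ (Fin d))) : 0 ≤ dirichletMu1 d Ω := by
  refine Real.sInf_nonneg ?_
  rintro q ⟨g, -, -, -, -, rfl⟩
  exact div_nonneg (integral_nonneg fun x => sq_nonneg _) (integral_nonneg fun x => sq_nonneg _)

theorem mu_le {Ω : Set (EuclideanSpace ℝ (Fin d))} {g : EuclideanSpace ℝ (Fin d) → ℝ}
    (hg : ContDiff ℝ (⊤ : ℕ∞) g) (hc : HasCompactSupport g) (h : tsupport g ⊆ Ω) :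
    dirichletMu1 d Ω * ∫ x, g x ^ 2 ≤ ∫ x, ‖gradient g x‖ ^ 2 := by
  by_cases h0 : g = 0
  · subst h0
    simp only [Pi.zero_apply, ne_eq, OfNat.ofNat_ne_zero, not_false_eq_true, zero_pow,
      integral_zero, mul_zero]
    exact integral_nonneg fun x => sq_nonneg _
  · rw [← le_div_iff₀ (sq_int_pos hg.continuous hc h0)]
    refine csInf_le ⟨0, ?_⟩ ⟨g, hg, hc, h, h0, by rw [set_sq h, set_grad h]⟩
    rintro q ⟨g, -, -, -, -, rfl⟩
    exact div_nonneg (integral_nonneg fun x => sq_nonneg _) (integral_nonneg fun x => sq_nonneg _)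

theorem mu_ball {c : EuclideanSpace ℝ (Fin d)} {r r' : ℝ} (hr : 0 < r) (hr' : 0 < r')
    {ψ : EuclideanSpace ℝ (Fin d) → ℝ}
    (hg : ContDiff ℝ (⊤ : ℕ∞) ψ) (hc : HasCompactSupport ψ) (h : tsupport ψ ⊆ Metric.ball 0 r') :
    dirichletMu1 d (Metric.ball c r) * (r / r') ^ 2 * ∫ x, ψ x ^ 2 ≤ ∫ x, ‖gradient ψ x‖ ^ 2 := by
  have hl : 0 < r' / r := by positivity
  have := mu_le (Ω := Metric.ball c r) (scale_smooth hg (r' / r) c) (scale_compact hc hl c) (by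
    intro x hx
    have := h (scale_tsupport _ _ _ hx)
    rw [mem_ball_zero_iff, norm_smul, Real.norm_of_nonneg hl.le] at this
    rw [mem_ball_iff_norm]
    have h2 : r' / r * ‖x - c‖ < r' / r * r := by rw [div_mul_cancel₀ _ hr.ne']; exact this
    exact lt_of_mul_lt_mul_left h2 hl.le)
  simp_rw [scale_grad hg hl] at this
  rw [scale_int (fun x => ψ x ^ 2) hl c,
    scale_int (fun x => (r' / r * ‖gradient ψ x‖) ^ 2) hl c] at this
  simp_rw [mul_pow] at this
  rw [integral_const_mul] at this
  have hp : 0 < ((r' / r) ^ d)⁻¹ := by positivity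
  have h3 : dirichletMu1 d (Metric.ball c r) * (∫ x, ψ x ^ 2) ≤
      (r' / r) ^ 2 * ∫ x, ‖gradient ψ x‖ ^ 2 := by
    refine le_of_mul_le_mul_left ?_ hp
    linarith
  have h4 := mul_le_mul_of_nonneg_left h3 (by positivity : 0 ≤ (r / r') ^ 2)
  calc _ = (r / r') ^ 2 * (dirichletMu1 d (Metric.ball c r) * (∫ x, ψ x ^ 2)) := by ring
    _ ≤ _ := h4
    _ = _ := by field_simp

/-- The Faber-Krahn inequality. -/
theorem faber_krahn (hd : 1 ≤ d) {c : EuclideanSpace ℝ (Fin d)} {r R : ℝ} (hr : 0 < r) (hR : 0 < R)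
    {Ω : Set (EuclideanSpace ℝ (Fin d))}
    (hΩ : volume Ω = volume (Metric.ball (0 : EuclideanSpace ℝ (Fin d)) R))
    {g : EuclideanSpace ℝ (Fin d) → ℝ}
    (hg : ContDiff ℝ (⊤ : ℕ∞) g) (hc : HasCompactSupport g) (h : tsupport g ⊆ Ω) :
    dirichletMu1 d (Metric.ball c r) * (r / R) ^ 2 * ∫ x, g x ^ 2 ≤ ∫ x, ‖gradient g x‖ ^ 2 := by
  obtain ⟨M, hM⟩ := hg.continuous.bounded_above_of_compact_support hc
  simp only [Real.norm_eq_abs] at hM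
  set k : EuclideanSpace ℝ (Fin d) → ℝ := fun y => |g y| with hk
  have hk0 : ∀ x, 0 ≤ k x := fun x => abs_nonneg _
  have hkm : Measurable k := hg.continuous.abs.measurable
  have hsub : {y | 0 < k y} ⊆ Ω := fun y hy => h (subset_closure (by
    have : 0 < |g y| := hy
    exact abs_pos.1 this))
  have hfin : volume {y | 0 < k y} ≠ ∞ :=
    ne_top_of_le_ne_top (hΩ ▸ measure_ball_lt_top.ne) (measure_mono hsub)
  have h0 := rearr_nonneg hk0 hM
  have hhM := rearr_le hk0 hM
  have hhm := rearr_measurable hk0 hM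
  have hRs : ∀ x, rearr k x ≠ 0 → ‖x‖ < R := by
    intro x hx
    have := of_lt_rearr le_rfl (lt_of_le_of_ne (h0 x) hx.symm)
    exact vol_ball_lt (this.trans_le ((measure_mono hsub).trans hΩ.le))
  let φ : ℕ → ContDiffBump (0 : EuclideanSpace ℝ (Fin d)) := fun n =>
    ⟨1 / (2 * ((n : ℝ) + 1)), 1 / ((n : ℝ) + 1), by positivity, by
      rw [div_lt_div_iff₀ (by positivity) (by positivity)]
      have : (0:ℝ) ≤ n := n.cast_nonneg
      linarith⟩
  have hφ : Tendsto (fun n => (φ n).rOut) atTop (𝓝 0) := tendsto_one_div_add_atTop_nhds_zero_nat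
  have hl : LocallyIntegrable (rearr k) volume := by
    refine (locallyIntegrable_const M).mono hhm.aestronglyMeasurable (Eventually.of_forall fun x => ?_)
    rw [Real.norm_of_nonneg (h0 x), Real.norm_eq_abs]
    exact (hhM x).trans (le_abs_self M)
  have hae : ∀ᵐ x, Tendsto (fun n => moll (φ n) (rearr k) x) atTop (𝓝 (rearr k x)) :=
    ContDiffBump.ae_convolution_tendsto_right_of_locallyIntegrable (K := 2) hφ
      (Eventually.of_forall fun n => by
        change 1 / ((n : ℝ) + 1) ≤ 2 * (1 / (2 * ((n : ℝ) + 1)))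
        apply le_of_eq
        field_simp) hl
  set m := dirichletMu1 d (Metric.ball c r) with hm
  have hm0 : 0 ≤ m := mu_nonneg _
  set D := ∫ x, ‖gradient g x‖ ^ 2
  have key : ∀ n, m * (r / (R + 2 * (φ n).rOut)) ^ 2 * ∫ x, moll (φ n) (rearr k) x ^ 2 ≤ D := by
    intro n
    have hp := (φ n).rOut_pos
    refine (mu_ball (c := c) hr (by positivity) (moll_contDiff hhm h0 hhM) ?_ ?_).trans
      (polya (φ := φ n) hd hg hc hM hfin hRs)
    · exact HasCompactSupport.of_support_subset_isCompact (isCompact_closedBall _ _)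
        (subset_closure.trans (moll_tsupport hRs))
    · exact (moll_tsupport hRs).trans (Metric.closedBall_subset_ball (by linarith))
  have hψi : ∀ n, Integrable fun x => moll (φ n) (rearr k) x ^ 2 := fun n =>
    sq_int (moll_contDiff hhm h0 hhM).continuous
      (HasCompactSupport.of_support_subset_isCompact (isCompact_closedBall _ _)
        (subset_closure.trans (moll_tsupport hRs)))
  have fatou : ENNReal.ofReal (∫ x, g x ^ 2) ≤
      liminf (fun n => ENNReal.ofReal (∫ x, moll (φ n) (rearr k) x ^ 2)) atTop := by
    calc ENNReal.ofReal (∫ x, g x ^ 2) = ∫⁻ x, ENNReal.ofReal (k x ^ 2) := by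
          rw [ofReal_integral_eq_lintegral_ofReal (sq_int hg.continuous hc)
            (Eventually.of_forall fun x => sq_nonneg _)]
          simp [hk]
      _ ≤ ∫⁻ x, ENNReal.ofReal (rearr k x ^ 2) :=
          level_lintegral_sq hkm hhm hk0 h0 fun b hb => rearr_level hd hk0 hM hfin hb
      _ = ∫⁻ x, liminf (fun n => ENNReal.ofReal (moll (φ n) (rearr k) x ^ 2)) atTop := by
          refine lintegral_congr_ae ?_
          filter_upwards [hae] with x hx
          exact (ENNReal.tendsto_ofReal (hx.pow 2)).liminf_eq.symm
      _ ≤ liminf (fun n => ∫⁻ x, ENNReal.ofReal (moll (φ n) (rearr k) x ^ 2)) atTop := by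
          refine lintegral_liminf_le fun n => ?_
          exact ((moll_contDiff hhm h0 hhM).continuous.measurable.pow_const 2).ennreal_ofReal
      _ = _ := by
          congr 1
          ext n
          rw [ofReal_integral_eq_lintegral_ofReal (hψi n)
            (Eventually.of_forall fun x => sq_nonneg _)]
  rcases hm0.eq_or_lt with hm0 | hm0
  · rw [← hm0]
    simp only [zero_mul]
    exact integral_nonneg fun x => sq_nonneg _
  have key2 : ∀ n, ∫ x, moll (φ n) (rearr k) x ^ 2 ≤ D / (m * (r / (R + 2 * (φ n).rOut)) ^ 2) := by
    intro n
    have hp := (φ n).rOut_pos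
    rw [le_div_iff₀ (by positivity)]
    linarith [key n]
  have lim : Tendsto (fun n => D / (m * (r / (R + 2 * (φ n).rOut)) ^ 2)) atTop
      (𝓝 (D / (m * (r / R) ^ 2))) := by
    have h1 : Tendsto (fun n => R + 2 * (φ n).rOut) atTop (𝓝 R) := by
      simpa using (hφ.const_mul 2).const_add R
    exact Tendsto.div tendsto_const_nhds (((tendsto_const_nhds.div h1 hR.ne').pow 2).const_mul m)
      (by positivity)
  have fin : ENNReal.ofReal (∫ x, g x ^ 2) ≤ ENNReal.ofReal (D / (m * (r / R) ^ 2)) := by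
    refine fatou.trans ?_
    rw [← (ENNReal.tendsto_ofReal lim).liminf_eq]
    exact liminf_le_liminf (Eventually.of_forall fun n => ENNReal.ofReal_le_ofReal (key2 n))
  have hD : 0 ≤ D := integral_nonneg fun x => sq_nonneg _
  rw [ENNReal.ofReal_le_ofReal_iff (by positivity), le_div_iff₀ (by positivity)] at fin
  linarith

end
end GFK


namespace GFK
open scoped ENNReal Topology

section
variable {d : ℕ} {s : ℝ}

theorem E1_nonneg (d : ℕ) (s : ℝ) : 0 ≤ schrodingerE1 d s 1 univ := by
  refine Real.sInf_nonneg ?_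
  rintro q ⟨g, -, -, -, -, rfl⟩
  exact div_nonneg (integral_nonneg fun x => by positivity) (integral_nonneg fun x => sq_nonneg _)

theorem pot_int (hs : 0 < s) {g : EuclideanSpace ℝ (Fin d) → ℝ} (hg : Continuous g)
    (hc : HasCompactSupport g) : Integrable fun x => ‖x‖ ^ (2 * s) * g x ^ 2 := by
  refine Continuous.integrable_of_hasCompactSupport ?_ ?_
  · exact (continuous_norm.rpow_const fun x => Or.inr (by positivity)).mul (hg.pow 2)
  · exact (hc.comp_left (g := fun t : ℝ => t ^ 2) (by simp)).mul_left

theorem E1_le (hs : 0 < s) {g : EuclideanSpace ℝ (Fin d) → ℝ}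
    (hg : ContDiff ℝ (⊤ : ℕ∞) g) (hc : HasCompactSupport g) :
    schrodingerE1 d s 1 univ * ∫ x, g x ^ 2 ≤
      (∫ x, ‖gradient g x‖ ^ 2) + ∫ x, ‖x‖ ^ (2 * s) * g x ^ 2 := by
  by_cases h0 : g = 0
  · subst h0
    simp only [Pi.zero_apply, ne_eq, OfNat.ofNat_ne_zero, not_false_eq_true, zero_pow,
      integral_zero, mul_zero, add_zero]
    exact integral_nonneg fun x => sq_nonneg _
  · rw [← le_div_iff₀ (sq_int_pos hg.continuous hc h0)]
    refine csInf_le ⟨0, ?_⟩ ⟨g, hg, hc, subset_univ _, h0, ?_⟩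
    · rintro q ⟨g, -, -, -, -, rfl⟩
      exact div_nonneg (integral_nonneg fun x => by positivity) (integral_nonneg fun x => sq_nonneg _)
    · rw [← integral_add (grad_sq_integrable hg hc) (pot_int hs hg.continuous hc)]
      simp

/-- Scaled ground state inequality. -/
theorem F2 (hs : 0 < s) {f : EuclideanSpace ℝ (Fin d) → ℝ}
    (hf : ContDiff ℝ (⊤ : ℕ∞) f) (hc : HasCompactSupport f) {t : ℝ} (ht : 0 < t) :
    t ^ (1 / (s + 1)) * schrodingerE1 d s 1 univ * ∫ x, f x ^ 2 ≤
      (∫ x, ‖gradient f x‖ ^ 2) + t * ∫ x, ‖x‖ ^ (2 * s) * f x ^ 2 := by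
  set l : ℝ := t ^ (-(1 / (2 * (s + 1)))) with hl
  have hl0 : 0 < l := Real.rpow_pos_of_pos ht _
  have := E1_le hs (scale_smooth hf l 0) (scale_compact hc hl0 0)
  simp_rw [scale_grad hf hl0] at this
  have e : ∀ x : EuclideanSpace ℝ (Fin d), ‖x‖ ^ (2 * s) * f (l • (x - 0)) ^ 2 =
      (fun y => (l ^ (2 * s))⁻¹ * (‖y‖ ^ (2 * s) * f y ^ 2)) (l • (x - 0)) := by
    intro x
    simp only [sub_zero]
    rw [norm_smul, Real.norm_of_nonneg hl0.le, Real.mul_rpow hl0.le (norm_nonneg _)]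
    have := Real.rpow_pos_of_pos hl0 (2 * s)
    field_simp
  simp_rw [e] at this
  rw [scale_int (fun x => f x ^ 2) hl0 0,
    scale_int (fun y => (l ^ (2 * s))⁻¹ * (‖y‖ ^ (2 * s) * f y ^ 2)) hl0 0,
    scale_int (fun x => (l * ‖gradient f x‖) ^ 2) hl0 0, integral_const_mul] at this
  simp_rw [mul_pow] at this
  rw [integral_const_mul] at this
  have hp : 0 < (l ^ d)⁻¹ := by positivity
  set E := schrodingerE1 d s 1 univ
  set A := ∫ x, ‖gradient f x‖ ^ 2
  set C := ∫ x, ‖x‖ ^ (2 * s) * f x ^ 2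
  set N := ∫ x, f x ^ 2
  have h1 : E * N ≤ l ^ 2 * A + (l ^ (2 * s))⁻¹ * C := by
    refine le_of_mul_le_mul_left ?_ hp
    linarith
  have e1 : t ^ (1 / (s + 1)) * l ^ 2 = 1 := by
    rw [hl, ← Real.rpow_natCast, ← Real.rpow_mul ht.le, ← Real.rpow_add ht]
    rw [show 1 / (s + 1) + -(1 / (2 * (s + 1))) * ((2 : ℕ) : ℝ) = 0 by push_cast; field_simp; ring]
    simp
  have e2 : t ^ (1 / (s + 1)) * (l ^ (2 * s))⁻¹ = t := by
    rw [hl, ← Real.rpow_mul ht.le, ← Real.rpow_neg ht.le, ← Real.rpow_add ht]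
    rw [show 1 / (s + 1) + -(-(1 / (2 * (s + 1))) * (2 * s)) = 1 by field_simp; ring]
    simp
  have h2 := mul_le_mul_of_nonneg_left h1 (Real.rpow_pos_of_pos ht (1 / (s + 1))).le
  calc t ^ (1 / (s + 1)) * E * N = t ^ (1 / (s + 1)) * (E * N) := by ring
    _ ≤ _ := h2
    _ = (t ^ (1 / (s + 1)) * l ^ 2) * A + (t ^ (1 / (s + 1)) * (l ^ (2 * s))⁻¹) * C := by ring
    _ = _ := by rw [e1, e2, one_mul]

theorem F3 (hs : 0 < s) {r : ℝ} (hr : 0 < r) {t : ℝ} (ht : 0 < t) :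
    t ^ (1 / (s + 1)) * schrodingerE1 d s 1 univ ≤
      dirichletMu1 d (Metric.ball (0 : EuclideanSpace ℝ (Fin d)) r) + t * r ^ (2 * s) := by
  rw [← sub_le_iff_le_add]
  refine le_csInf ?_ ?_
  · obtain ⟨f, h1, h2, h3, -, h5⟩ := exists_contDiff_tsupport_subset (n := (⊤ : ℕ∞))
      (Metric.ball_mem_nhds (0 : EuclideanSpace ℝ (Fin d)) hr)
    exact ⟨_, f, h3, h2, h1, fun h => by simp [h] at h5, rfl⟩
  · rintro q ⟨g, hg, hc, h, h0, rfl⟩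
    rw [set_sq h, set_grad h]
    have hN := sq_int_pos hg.continuous hc h0
    rw [le_div_iff₀ hN]
    have h1 := F2 hs hg hc ht
    have h2 : ∫ x, ‖x‖ ^ (2 * s) * g x ^ 2 ≤ r ^ (2 * s) * ∫ x, g x ^ 2 := by
      rw [← integral_const_mul]
      refine integral_mono (pot_int hs hg.continuous hc) ((sq_int hg.continuous hc).const_mul _)
        fun x => ?_
      by_cases hx : x ∈ tsupport g
      · have := h hx
        rw [mem_ball_zero_iff] at this
        exact mul_le_mul_of_nonneg_right
          (Real.rpow_le_rpow (norm_nonneg _) this.le (by positivity)) (sq_nonneg _)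
      · simp [image_eq_zero_of_notMem_tsupport hx]
    have h3 := mul_le_mul_of_nonneg_left h2 ht.le
    linarith

end

/-- Algebraic core. -/
theorem core {A C N σ L T p s E μ a : ℝ} (hL : 0 < L) (hT : 0 < T) (hσ : 0 < σ) (hp : 0 < p)
    (hp1 : p < 1) (hs : 0 < s) (hps : p ≤ 1 / (s + 1))
    (hN : 0 ≤ N) (hE : 0 ≤ E)
    (F2 : ∀ t, 0 < t → t ^ (1 / (s + 1)) * E * N ≤ A + t * C)
    (FK : μ * (1 / L) ^ 2 * N ≤ A)
    (F3 : T ^ (1 / (s + 1)) * E ≤ μ + T * a) (hμ : T * a = p / (1 - p) * μ) :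
    L⁻¹ ^ 2 * (σ * L ^ (2 * s + 2)) ^ p * T ^ (1 / (s + 1) - p) * E * N ≤ A + σ * C := by
  have hs1 : 0 < s + 1 := by linarith
  have hLp : 0 < L ^ (2 * s + 2) := Real.rpow_pos_of_pos hL _
  set t := σ * L ^ (2 * s + 2) with ht
  have ht0 : 0 < t := by positivity
  have hLs : (L ^ (2 * s + 2)) ^ (1 / (s + 1)) = L ^ 2 := by
    rw [← Real.rpow_mul hL.le, ← Real.rpow_natCast]
    congr 1
    push_cast
    field_simp
  rcases le_total T t with h | h
  · refine le_trans ?_ (F2 σ hσ)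
    refine mul_le_mul_of_nonneg_right (mul_le_mul_of_nonneg_right ?_ hE) hN
    have h1 : T ^ (1 / (s + 1) - p) ≤ t ^ (1 / (s + 1) - p) :=
      Real.rpow_le_rpow hT.le h (by linarith)
    have h2 : t ^ p * t ^ (1 / (s + 1) - p) = σ ^ (1 / (s + 1)) * L ^ 2 := by
      rw [← Real.rpow_add ht0, ← hLs, ← Real.mul_rpow hσ.le hLp.le]
      congr 1
      ring
    calc L⁻¹ ^ 2 * t ^ p * T ^ (1 / (s + 1) - p) ≤ L⁻¹ ^ 2 * t ^ p * t ^ (1 / (s + 1) - p) :=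
          mul_le_mul_of_nonneg_left h1 (by positivity)
      _ = L⁻¹ ^ 2 * (t ^ p * t ^ (1 / (s + 1) - p)) := by ring
      _ = _ := by rw [h2]; field_simp
  · set θ := t / T with hθ
    have hθ0 : 0 < θ := by positivity
    have hθ1 : θ ≤ 1 := (div_le_one hT).2 h
    have h1 := F2 (T / L ^ (2 * s + 2)) (by positivity)
    rw [Real.div_rpow hT.le hLp.le, hLs] at h1
    set e := T ^ (1 / (s + 1)) * E with he
    have he0 : 0 ≤ e := by positivity
    have hp1' : 0 < 1 - p := by linarith
    have h3 : (1 - p) * e ≤ μ := by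
      have : μ + T * a = μ / (1 - p) := by rw [hμ]; field_simp; ring
      rw [this, le_div_iff₀ hp1'] at F3
      linarith
    have h4 : (1 - p) * e * L⁻¹ ^ 2 * N ≤ A := by
      refine le_trans ?_ FK
      rw [one_div]
      gcongr
    have h5 : e * L⁻¹ ^ 2 * N ≤ A + (T / L ^ (2 * s + 2)) * C := by
      refine le_trans (le_of_eq ?_) h1
      rw [he]; field_simp
    have h6 : θ * (T / L ^ (2 * s + 2)) = σ := by
      rw [hθ, ht]; field_simp
    have h7 : θ ^ p ≤ 1 - p + p * θ := by
      have := Real.geom_mean_le_arith_mean2_weighted hp.le hp1'.le hθ0.le zero_le_one (by ring)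
      simp only [Real.one_rpow, mul_one] at this
      linarith
    have h8 : t ^ p * T ^ (1 / (s + 1) - p) = θ ^ p * T ^ (1 / (s + 1)) := by
      rw [hθ, Real.div_rpow ht0.le hT.le, Real.rpow_sub hT]
      ring
    calc L⁻¹ ^ 2 * t ^ p * T ^ (1 / (s + 1) - p) * E * N
        = L⁻¹ ^ 2 * (t ^ p * T ^ (1 / (s + 1) - p)) * E * N := by ring
      _ = θ ^ p * (e * L⁻¹ ^ 2 * N) := by rw [h8, he]; ring
      _ ≤ (1 - p + p * θ) * (e * L⁻¹ ^ 2 * N) :=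
          mul_le_mul_of_nonneg_right h7 (by positivity)
      _ = (1 - θ) * ((1 - p) * e * L⁻¹ ^ 2 * N) + θ * (e * L⁻¹ ^ 2 * N) := by ring
      _ ≤ (1 - θ) * A + θ * (A + (T / L ^ (2 * s + 2)) * C) :=
          add_le_add (mul_le_mul_of_nonneg_left h4 (by linarith))
            (mul_le_mul_of_nonneg_left h5 hθ0.le)
      _ = A + θ * (T / L ^ (2 * s + 2)) * C := by ring
      _ = _ := by rw [h6]

end GFK


namespace GFK
open scoped ENNReal Topology

theorem tau_eq {d : ℕ} (hd : 1 ≤ d) {r : ℝ} (hr : 0 < r)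
    (h : volume (Metric.ball (0 : EuclideanSpace ℝ (Fin d)) r) = 1) : tau d * r ^ d = 1 := by
  have : Nonempty (Fin d) := ⟨⟨0, hd⟩⟩
  have h1 := congrArg ENNReal.toReal h
  have hG : 0 < Real.Gamma ((d : ℝ) / 2 + 1) := Real.Gamma_pos_of_pos (by positivity)
  rw [EuclideanSpace.volume_ball, ENNReal.toReal_mul, ENNReal.toReal_pow,
    ENNReal.toReal_ofReal hr.le, Fintype.card_fin, ENNReal.toReal_ofReal (by positivity)] at h1
  rw [ENNReal.toReal_one] at h1
  rw [← h1, tau, mul_comm, Real.sqrt_eq_rpow, ← Real.rpow_natCast (Real.pi ^ (1 / 2 : ℝ)),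
    ← Real.rpow_mul Real.pi_pos.le, add_comm (1 : ℝ)]
  congr 3
  ring

theorem tau_pow {d : ℕ} (hd : 1 ≤ d) {r s : ℝ} (hr : 0 < r)
    (h : volume (Metric.ball (0 : EuclideanSpace ℝ (Fin d)) r) = 1) :
    tau d ^ (2 * s / (d : ℝ)) * r ^ (2 * s) = 1 := by
  have h1 := tau_eq hd hr h
  have hd0 : (0 : ℝ) < d := by exact_mod_cast hd
  have ht : 0 < tau d := by
    have : 0 < r ^ d := by positivity
    by_contra! hh
    nlinarith
  have e : r ^ (2 * s) = (r ^ d) ^ (2 * s / (d : ℝ)) := by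
    rw [← Real.rpow_natCast, ← Real.rpow_mul hr.le]
    congr 1
    field_simp
  rw [e, ← Real.mul_rpow ht.le (by positivity), h1, Real.one_rpow]

theorem vol_ratio {d : ℕ} (hd : 1 ≤ d) {c : EuclideanSpace ℝ (Fin d)} {r R : ℝ} (hr : 0 < r)
    (hR : 0 < R) (h : volume (Metric.ball c r) = 1) :
    (volume (Metric.ball (0 : EuclideanSpace ℝ (Fin d)) R)).toReal = (R / r) ^ d := by
  have : Nonempty (Fin d) := ⟨⟨0, hd⟩⟩
  rw [Measure.addHaar_ball _ _ hr.le] at h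
  rw [Measure.addHaar_ball _ _ hR.le]
  have h1 := congrArg ENNReal.toReal h
  simp only [finrank_euclideanSpace, Fintype.card_fin, ENNReal.toReal_mul, ENNReal.toReal_one,
    ENNReal.toReal_ofReal (pow_nonneg hr.le d)] at h1
  simp only [finrank_euclideanSpace, Fintype.card_fin, ENNReal.toReal_mul,
    ENNReal.toReal_ofReal (pow_nonneg hR.le d)]
  rw [div_pow, eq_div_iff (by positivity), mul_assoc, mul_comm _ (r ^ d), h1, mul_one]

theorem exists_radius {d : ℕ} (hd : 1 ≤ d) {Ω : Set (EuclideanSpace ℝ (Fin d))} (ho : IsOpen Ω)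
    (hne : Ω.Nonempty) (hb : Bornology.IsBounded Ω) : ∃ R, 0 < R ∧
      volume Ω = volume (Metric.ball (0 : EuclideanSpace ℝ (Fin d)) R) := by
  obtain ⟨R, hR, h⟩ := exists_ball_vol (d := d) hd (m := volume Ω) hb.measure_lt_top.ne
  refine ⟨R, hR.lt_of_ne ?_, h.symm⟩
  rintro rfl
  have := ho.measure_pos volume hne
  simp [← h] at this

/-- Matching of exponents. -/
theorem exponents {L L₂ μ₂ T a b s : ℝ} (hL : 0 < L) (hL₂ : 0 < L₂) (hμ : 0 < μ₂) (hT : 0 < T)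
    (n m : ℕ) (hna : (n : ℝ) = a) (hmb : (m : ℝ) = b) (ha : 0 < a) (hb : 0 < b) (hs : 0 < s) :
    L⁻¹ ^ 2 * (μ₂ * (1 / L₂) ^ 2 * L ^ (2 * s + 2)) ^ (b / (a + (1 + s) * b)) *
      T ^ (1 / (s + 1) - b / (a + (1 + s) * b)) =
    μ₂ ^ (1 / (s + 1)) * (L ^ n * L₂ ^ m) ^ (-(2 : ℝ) / (a + (1 + s) * b)) *
      (T / μ₂) ^ (a / ((s + 1) * (a + (1 + s) * b))) := by
  have hD : 0 < a + (1 + s) * b := by positivity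
  have hs1 : 0 < s + 1 := by linarith
  have hk : 1 / (s + 1) - b / (a + (1 + s) * b) = a / ((s + 1) * (a + (1 + s) * b)) := by
    field_simp; ring
  rw [hk]
  have hlog : ∀ x y : ℝ, 0 < x → 0 < y → Real.log x = Real.log y → x = y := fun x y hx hy h =>
    Real.log_injOn_pos hx hy h
  have hr : ∀ x y : ℝ, 0 < x → 0 < x ^ y := fun x y hx => Real.rpow_pos_of_pos hx y
  have p1 := hr L (2 * s + 2) hL
  have p2 := hr (μ₂ * (1 / L₂) ^ 2 * L ^ (2 * s + 2)) (b / (a + (1 + s) * b)) (by positivity)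
  have p3 := hr T (a / ((s + 1) * (a + (1 + s) * b))) hT
  have p4 := hr μ₂ (1 / (s + 1)) hμ
  have p5 := hr (L ^ n * L₂ ^ m) (-(2 : ℝ) / (a + (1 + s) * b)) (by positivity)
  have p6 := hr (T / μ₂) (a / ((s + 1) * (a + (1 + s) * b))) (by positivity)
  refine hlog _ _ (by positivity) (by positivity) ?_
  rw [Real.log_mul (by positivity) (by positivity), Real.log_mul (by positivity) (by positivity),
    Real.log_mul (by positivity) (by positivity), Real.log_mul (by positivity) (by positivity),
    Real.log_rpow (by positivity), Real.log_rpow hT, Real.log_rpow hμ,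
    Real.log_rpow (by positivity), Real.log_rpow (by positivity),
    Real.log_mul (by positivity) (by positivity), Real.log_mul (by positivity) (by positivity),
    Real.log_mul (by positivity) (by positivity), Real.log_div hT.ne' hμ.ne',
    Real.log_rpow hL, Real.log_pow, Real.log_pow, Real.log_pow, Real.log_pow, Real.log_inv,
    one_div, Real.log_inv, hna, hmb]
  push_cast
  field_simp
  ring

theorem grushin_nonneg (d₁ d₂ : ℕ) (s : ℝ)
    (Ω : Set (EuclideanSpace ℝ (Fin d₁) × EuclideanSpace ℝ (Fin d₂))) :
    0 ≤ grushinLambda1 d₁ d₂ s Ω := by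
  refine Real.sInf_nonneg ?_
  rintro q ⟨g, -, -, -, -, rfl⟩
  exact div_nonneg (integral_nonneg fun x => by positivity) (integral_nonneg fun x => sq_nonneg _)

section
variable {d₁ d₂ : ℕ} {u : EuclideanSpace ℝ (Fin d₁) × EuclideanSpace ℝ (Fin d₂) → ℝ}

theorem slice1_smooth (hu : ContDiff ℝ (⊤ : ℕ∞) u) (b : EuclideanSpace ℝ (Fin d₂)) :
    ContDiff ℝ (⊤ : ℕ∞) fun y => u (y, b) := hu.comp (contDiff_id.prodMk contDiff_const)

theorem slice2_smooth (hu : ContDiff ℝ (⊤ : ℕ∞) u) (a : EuclideanSpace ℝ (Fin d₁)) :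
    ContDiff ℝ (⊤ : ℕ∞) fun y => u (a, y) := hu.comp (contDiff_const.prodMk contDiff_id)

theorem slice1_tsupport {b : EuclideanSpace ℝ (Fin d₂)} {y : EuclideanSpace ℝ (Fin d₁)}
    (h : y ∈ tsupport fun y => u (y, b)) : (y, b) ∈ tsupport u :=
  tsupport_comp_subset_preimage u
    (by fun_prop : Continuous fun y : EuclideanSpace ℝ (Fin d₁) => (y, b)) h

theorem slice2_tsupport {a : EuclideanSpace ℝ (Fin d₁)} {y : EuclideanSpace ℝ (Fin d₂)}
    (h : y ∈ tsupport fun y => u (a, y)) : (a, y) ∈ tsupport u :=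
  tsupport_comp_subset_preimage u
    (by fun_prop : Continuous fun y : EuclideanSpace ℝ (Fin d₂) => (a, y)) h

theorem slice1_compact (hc : HasCompactSupport u) (b : EuclideanSpace ℝ (Fin d₂)) :
    HasCompactSupport fun y => u (y, b) :=
  HasCompactSupport.of_support_subset_isCompact (hc.isCompact.image continuous_fst)
    fun y hy => ⟨(y, b), subset_closure hy, rfl⟩

theorem slice2_compact (hc : HasCompactSupport u) (a : EuclideanSpace ℝ (Fin d₁)) :
    HasCompactSupport fun y => u (a, y) :=
  HasCompactSupport.of_support_subset_isCompact (hc.isCompact.image continuous_snd)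
    fun y hy => ⟨(a, y), subset_closure hy, rfl⟩

theorem grad1 (hu : ContDiff ℝ (⊤ : ℕ∞) u)
    (x : EuclideanSpace ℝ (Fin d₁) × EuclideanSpace ℝ (Fin d₂)) :
    ‖gradient (fun y => u (y, x.2)) x.1‖ =
      ‖(fderiv ℝ u x).comp (ContinuousLinearMap.inl ℝ (EuclideanSpace ℝ (Fin d₁)) (EuclideanSpace ℝ (Fin d₂)))‖ := by
  rw [norm_gradient]
  have h1 : HasFDerivAt u (fderiv ℝ u x) (x.1, x.2) :=
    ((hu.differentiable (by simp)) _).hasFDerivAt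
  have h2 := (h1.comp x.1 (hasFDerivAt_prodMk_left (𝕜 := ℝ) x.1 x.2)).fderiv
  exact congrArg norm h2

theorem grad2 (hu : ContDiff ℝ (⊤ : ℕ∞) u)
    (x : EuclideanSpace ℝ (Fin d₁) × EuclideanSpace ℝ (Fin d₂)) :
    ‖gradient (fun y => u (x.1, y)) x.2‖ =
      ‖(fderiv ℝ u x).comp (ContinuousLinearMap.inr ℝ (EuclideanSpace ℝ (Fin d₁)) (EuclideanSpace ℝ (Fin d₂)))‖ := by
  rw [norm_gradient]
  have h1 : HasFDerivAt u (fderiv ℝ u x) (x.1, x.2) :=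
    ((hu.differentiable (by simp)) _).hasFDerivAt
  have h2 := (h1.comp x.2 (hasFDerivAt_prodMk_right (𝕜 := ℝ) x.1 x.2)).fderiv
  exact congrArg norm h2

theorem grad1_int (hu : ContDiff ℝ (⊤ : ℕ∞) u) (hc : HasCompactSupport u) :
    Integrable fun x : EuclideanSpace ℝ (Fin d₁) × EuclideanSpace ℝ (Fin d₂) =>
      ‖gradient (fun y => u (y, x.2)) x.1‖ ^ 2 := by
  simp_rw [grad1 hu]
  refine Continuous.integrable_of_hasCompactSupport ?_ ?_
  · have := hu.continuous_fderiv (by simp)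
    fun_prop
  · exact (hc.fderiv ℝ).comp_left
      (g := fun L :
        EuclideanSpace ℝ (Fin d₁) × EuclideanSpace ℝ (Fin d₂) →L[ℝ] ℝ => ‖L.comp (ContinuousLinearMap.inl ℝ (EuclideanSpace ℝ (Fin d₁)) (EuclideanSpace ℝ (Fin d₂)))‖ ^ 2) (by simp)

theorem weight_cont {s : ℝ} (hs : 0 < s) :
    Continuous fun x : EuclideanSpace ℝ (Fin d₁) × EuclideanSpace ℝ (Fin d₂) =>
      ‖x.1‖ ^ (2 * s) :=
  continuous_fst.norm.rpow_const fun x => Or.inr (by positivity)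

theorem grad2_int {s : ℝ} (hs : 0 < s) (hu : ContDiff ℝ (⊤ : ℕ∞) u) (hc : HasCompactSupport u) :
    Integrable fun x : EuclideanSpace ℝ (Fin d₁) × EuclideanSpace ℝ (Fin d₂) =>
      ‖x.1‖ ^ (2 * s) * ‖gradient (fun y => u (x.1, y)) x.2‖ ^ 2 := by
  simp_rw [grad2 hu]
  refine Continuous.integrable_of_hasCompactSupport ?_ ?_
  · have := hu.continuous_fderiv (by simp)
    exact (weight_cont hs).mul (by fun_prop)
  · exact ((hc.fderiv ℝ).comp_left
      (g := fun L :
        EuclideanSpace ℝ (Fin d₁) × EuclideanSpace ℝ (Fin d₂) →L[ℝ] ℝ => ‖L.comp (ContinuousLinearMap.inr ℝ (EuclideanSpace ℝ (Fin d₁)) (EuclideanSpace ℝ (Fin d₂)))‖ ^ 2) (by simp)).mul_left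

theorem u_int (hu : ContDiff ℝ (⊤ : ℕ∞) u) (hc : HasCompactSupport u) :
    Integrable fun x => u x ^ 2 :=
  Continuous.integrable_of_hasCompactSupport (hu.continuous.pow 2)
    (hc.comp_left (g := fun t : ℝ => t ^ 2) (by simp))

theorem w_int {s : ℝ} (hs : 0 < s) (hu : ContDiff ℝ (⊤ : ℕ∞) u) (hc : HasCompactSupport u) :
    Integrable fun x => ‖x.1‖ ^ (2 * s) * u x ^ 2 :=
  Continuous.integrable_of_hasCompactSupport ((weight_cont hs).mul (hu.continuous.pow 2))
    (hc.comp_left (g := fun t : ℝ => t ^ 2) (by simp)).mul_left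

theorem u_int_pos (hu : ContDiff ℝ (⊤ : ℕ∞) u) (hc : HasCompactSupport u) (h0 : u ≠ 0) :
    0 < ∫ x, u x ^ 2 := by
  rw [integral_pos_iff_support_of_nonneg (fun x => sq_nonneg _) (u_int hu hc)]
  have : Function.support (fun x => u x ^ 2) = Function.support u := by ext; simp
  rw [this]
  exact (hu.continuous.isOpen_support).measure_pos _ (Function.support_nonempty_iff.2 h0)

/-- Reduction to slices. -/
theorem slices {s σ K : ℝ} (hs : 0 < s) (hu : ContDiff ℝ (⊤ : ℕ∞) u) (hc : HasCompactSupport u)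
    (h2 : ∀ a, σ * ∫ y, u (a, y) ^ 2 ≤ ∫ y, ‖gradient (fun y => u (a, y)) y‖ ^ 2)
    (h1 : ∀ b, K * ∫ y, u (y, b) ^ 2 ≤ (∫ y, ‖gradient (fun y => u (y, b)) y‖ ^ 2) +
      σ * ∫ y, ‖y‖ ^ (2 * s) * u (y, b) ^ 2) :
    K * ∫ x, u x ^ 2 ≤ ∫ x : EuclideanSpace ℝ (Fin d₁) × EuclideanSpace ℝ (Fin d₂),
      (‖gradient (fun y => u (y, x.2)) x.1‖ ^ 2
          + ‖x.1‖ ^ (2 * s) * ‖gradient (fun y => u (x.1, y)) x.2‖ ^ 2) := by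
  have i1 := grad1_int hu hc
  have i2 := grad2_int hs hu hc
  have iu := u_int hu hc
  have iw := w_int hs hu hc
  rw [integral_add i1 i2]
  rw [Measure.volume_eq_prod] at *
  have s2 : σ * ∫ x, ‖x.1‖ ^ (2 * s) * u x ^ 2 ∂(volume.prod volume) ≤
      ∫ x : EuclideanSpace ℝ (Fin d₁) × EuclideanSpace ℝ (Fin d₂),
        ‖x.1‖ ^ (2 * s) * ‖gradient (fun y => u (x.1, y)) x.2‖ ^ 2 ∂(volume.prod volume) := by
    rw [← integral_const_mul, integral_prod _ (iw.const_mul σ), integral_prod _ i2]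
    refine integral_mono (iw.const_mul σ).integral_prod_left i2.integral_prod_left fun a => ?_
    simp only
    rw [integral_const_mul, integral_const_mul, integral_const_mul]
    have := mul_le_mul_of_nonneg_left (h2 a) (by positivity : 0 ≤ ‖a‖ ^ (2 * s))
    linarith
  have s1 : K * ∫ x, u x ^ 2 ∂(volume.prod volume) ≤
      (∫ x : EuclideanSpace ℝ (Fin d₁) × EuclideanSpace ℝ (Fin d₂),
        ‖gradient (fun y => u (y, x.2)) x.1‖ ^ 2 ∂(volume.prod volume)) +
      σ * ∫ x, ‖x.1‖ ^ (2 * s) * u x ^ 2 ∂(volume.prod volume) := by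
    rw [← integral_const_mul, ← integral_const_mul, integral_prod_symm _ (iu.const_mul K),
      integral_prod_symm _ i1, integral_prod_symm _ (iw.const_mul σ),
      ← integral_add i1.integral_prod_right (iw.const_mul σ).integral_prod_right]
    refine integral_mono (iu.const_mul K).integral_prod_right
      (i1.integral_prod_right.add (iw.const_mul σ).integral_prod_right) fun b => ?_
    simp only
    rw [integral_const_mul, integral_const_mul]
    exact h1 b
  linarith

end
end GFK


/-- lower bound for the first Grushin eigenvalue of any cartesian product
domain of total volume `V`. -/
theorem grushin_lambda1_global_lower_bound (d₁ d₂ : ℕ) (hd₁ : 1 ≤ d₁) (hd₂ : 1 ≤ d₂)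
    (s : ℝ) (hs : 0 < s) (V : ℝ) (hV : 0 < V)
    (rB₁ : ℝ) (hrB₁ : 0 < rB₁)
    (hB₁ : volume (Metric.ball (0 : EuclideanSpace ℝ (Fin d₁)) rB₁) = 1)
    (c₂ : EuclideanSpace ℝ (Fin d₂)) (rB₂ : ℝ) (hrB₂ : 0 < rB₂)
    (hB₂ : volume (Metric.ball c₂ rB₂) = 1)
    (Ω₁ : Set (EuclideanSpace ℝ (Fin d₁))) (Ω₂ : Set (EuclideanSpace ℝ (Fin d₂)))
    (hΩ₁open : IsOpen Ω₁) (hΩ₁conn : IsConnected Ω₁) (hΩ₁bd : Bornology.IsBounded Ω₁)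
    (hΩ₂open : IsOpen Ω₂) (hΩ₂conn : IsConnected Ω₂) (hΩ₂bd : Bornology.IsBounded Ω₂)
    (hvol : (volume Ω₁).toReal * (volume Ω₂).toReal = V) :
    grushinLambda1 d₁ d₂ s (Ω₁ ×ˢ Ω₂) ≥
      dirichletMu1 d₂ (Metric.ball c₂ rB₂) ^ (1 / (s + 1)) *
        V ^ (-(2 : ℝ) / ((d₁ : ℝ) + (1 + s) * (d₂ : ℝ))) *
        schrodingerE1 d₁ s 1 (Set.univ : Set (EuclideanSpace ℝ (Fin d₁))) *
        (tau d₁ ^ (2 * s / (d₁ : ℝ)) * (d₂ : ℝ) *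
            dirichletMu1 d₁ (Metric.ball (0 : EuclideanSpace ℝ (Fin d₁)) rB₁) /
            (((d₁ : ℝ) + s * (d₂ : ℝ)) * dirichletMu1 d₂ (Metric.ball c₂ rB₂))) ^
          ((d₁ : ℝ) / ((s + 1) * ((d₁ : ℝ) + (1 + s) * (d₂ : ℝ)))) := by
  have ha : (0 : ℝ) < d₁ := by exact_mod_cast hd₁
  have hb : (0 : ℝ) < d₂ := by exact_mod_cast hd₂
  set μ₁ := dirichletMu1 d₁ (Metric.ball (0 : EuclideanSpace ℝ (Fin d₁)) rB₁) with hμ₁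
  set μ₂ := dirichletMu1 d₂ (Metric.ball c₂ rB₂) with hμ₂
  set E := schrodingerE1 d₁ s 1 (Set.univ : Set (EuclideanSpace ℝ (Fin d₁))) with hE
  have hD : 0 < (d₁ : ℝ) + (1 + s) * (d₂ : ℝ) := by positivity
  have hs1 : 0 < s + 1 := by linarith
  have hκ : (d₁ : ℝ) / ((s + 1) * ((d₁ : ℝ) + (1 + s) * (d₂ : ℝ))) ≠ 0 := by positivity
  have hE0 : 0 ≤ E := GFK.E1_nonneg d₁ s
  rcases (GFK.mu_nonneg (Metric.ball (0 : EuclideanSpace ℝ (Fin d₁)) rB₁)).eq_or_lt with h1 | h1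
  · rw [← hμ₁] at h1
    rw [← h1, mul_zero, zero_div, Real.zero_rpow hκ, mul_zero]
    exact GFK.grushin_nonneg _ _ _ _
  rcases (GFK.mu_nonneg (Metric.ball c₂ rB₂)).eq_or_lt with h2 | h2
  · rw [← hμ₂] at h2
    rw [← h2, Real.zero_rpow (by positivity), zero_mul, zero_mul, zero_mul]
    exact GFK.grushin_nonneg _ _ _ _
  rw [← hμ₁] at h1
  rw [← hμ₂] at h2
  obtain ⟨R₁, hR₁, hv₁⟩ := GFK.exists_radius hd₁ hΩ₁open hΩ₁conn.nonempty hΩ₁bd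
  obtain ⟨R₂, hR₂, hv₂⟩ := GFK.exists_radius hd₂ hΩ₂open hΩ₂conn.nonempty hΩ₂bd
  have hL : 0 < R₁ / rB₁ := by positivity
  have hL₂ : 0 < R₂ / rB₂ := by positivity
  have hVeq : V = (R₁ / rB₁) ^ d₁ * (R₂ / rB₂) ^ d₂ := by
    rw [← hvol, hv₁, hv₂, GFK.vol_ratio hd₁ hrB₁ hR₁ hB₁, GFK.vol_ratio hd₂ hrB₂ hR₂ hB₂]
  have htau := GFK.tau_pow (s := s) hd₁ hrB₁ hB₁
  have hrp : 0 < rB₁ ^ (2 * s) := Real.rpow_pos_of_pos hrB₁ _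
  have htp : 0 < tau d₁ ^ (2 * s / (d₁ : ℝ)) := by
    by_contra! hh
    nlinarith
  set w := tau d₁ ^ (2 * s / (d₁ : ℝ)) with hw
  set T := w * d₂ * μ₁ / (d₁ + s * d₂) with hT
  have hT0 : 0 < T := by positivity
  have hTμ : w * d₂ * μ₁ / ((d₁ + s * d₂) * μ₂) = T / μ₂ := by
    rw [hT, div_div]
  rw [hTμ, hVeq]
  set σ := μ₂ * (1 / (R₂ / rB₂)) ^ 2 with hσ
  have hσ0 : 0 < σ := by positivity
  set p : ℝ := d₂ / (d₁ + (1 + s) * d₂) with hp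
  have hp0 : 0 < p := by positivity
  have hp1 : p < 1 := by
    rw [hp, div_lt_one hD]
    nlinarith [mul_pos hs hb]
  have hps : p ≤ 1 / (s + 1) := by
    rw [hp, div_le_div_iff₀ hD hs1]
    linarith
  have hTa : T * rB₁ ^ (2 * s) = p / (1 - p) * μ₁ := by
    have e1 : p / (1 - p) = d₂ / (d₁ + s * d₂) := by
      have e2 : 1 - p = (d₁ + s * d₂) / (d₁ + (1 + s) * d₂) := by
        rw [hp]; field_simp; ring
      rw [e2, hp]; field_simp
    rw [e1, hT]
    calc w * d₂ * μ₁ / (d₁ + s * d₂) * rB₁ ^ (2 * s)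
        = (w * rB₁ ^ (2 * s)) * (d₂ / (d₁ + s * d₂) * μ₁) := by ring
      _ = _ := by rw [htau, one_mul]
  have hex := GFK.exponents hL hL₂ h2 hT0 d₁ d₂ rfl rfl ha hb hs
  have goal_eq : μ₂ ^ (1 / (s + 1)) * ((R₁ / rB₁) ^ d₁ * (R₂ / rB₂) ^ d₂) ^
        (-(2 : ℝ) / ((d₁ : ℝ) + (1 + s) * (d₂ : ℝ))) * E * (T / μ₂) ^
        ((d₁ : ℝ) / ((s + 1) * ((d₁ : ℝ) + (1 + s) * (d₂ : ℝ)))) =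
      (R₁ / rB₁)⁻¹ ^ 2 * (σ * (R₁ / rB₁) ^ (2 * s + 2)) ^ p * T ^ (1 / (s + 1) - p) * E := by
    rw [hσ, hp, hex]; ring
  rw [goal_eq, ge_iff_le]
  refine le_csInf ?_ ?_
  · obtain ⟨x, hx⟩ := hΩ₁conn.nonempty.prod hΩ₂conn.nonempty
    obtain ⟨f, f1, f2, f3, -, f5⟩ := exists_contDiff_tsupport_subset (n := (⊤ : ℕ∞))
      ((hΩ₁open.prod hΩ₂open).mem_nhds hx)
    exact ⟨_, f, f3, f2, f1, fun h => by simp [h] at f5, rfl⟩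
  · rintro q ⟨u, hu, hc, hsupp, h0, rfl⟩
    have z0 : ∀ x, x ∉ Ω₁ ×ˢ Ω₂ → x ∉ tsupport u := fun x hx hh => hx (hsupp hh)
    rw [setIntegral_eq_integral_of_forall_compl_eq_zero (s := Ω₁ ×ˢ Ω₂)
        (f := fun x => u x ^ 2) (fun x hx => by
          simp [image_eq_zero_of_notMem_tsupport (z0 x hx)]),
      setIntegral_eq_integral_of_forall_compl_eq_zero (s := Ω₁ ×ˢ Ω₂) (fun x hx => by
          rw [GFK.grad_zero (fun hh => z0 x hx (GFK.slice1_tsupport hh)),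
            GFK.grad_zero (fun hh => z0 x hx (GFK.slice2_tsupport hh))]
          simp), le_div_iff₀ (GFK.u_int_pos hu hc h0)]
    refine GFK.slices (σ := σ) hs hu hc (fun a => ?_) fun b => ?_
    · have := GFK.faber_krahn (c := c₂) hd₂ hrB₂ hR₂ hv₂ (GFK.slice2_smooth hu a)
        (GFK.slice2_compact hc a) (fun y hy => (hsupp (GFK.slice2_tsupport hy)).2)
      rw [hσ, one_div_div]
      exact this
    · have fk := GFK.faber_krahn (c := 0) hd₁ hrB₁ hR₁ hv₁ (GFK.slice1_smooth hu b)
        (GFK.slice1_compact hc b) (fun y hy => (hsupp (GFK.slice1_tsupport hy)).1)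
      rw [← one_div_div R₁ rB₁] at fk
      exact GFK.core hL hT0 hσ0 hp0 hp1 hs hps (integral_nonneg fun x => sq_nonneg _) hE0
        (fun t ht => GFK.F2 hs (GFK.slice1_smooth hu b) (GFK.slice1_compact hc b) ht)
        fk (GFK.F3 hs hrB₁ hT0) hTa
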